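/- arXiv:2412.15842 — 3 statements merged into one kernel-verified Lean document; each statement's English description precedes it below -/
import Mathlib

section
/- Let G be a finite group acting transitively and faithfully with fixity 3 on a finite set Ω, and let N be a minimal normal subgroup of G which is a p-group of order p^n. If N does not act semi-regularly on Ω, then |Ω| = 6, |N| = 9, all N-orbits have length 3, G has order 36 with structure (C_3 × C_3) : C_4, and point stabilizers are isomorphic to Sym_3. -/
open MulAction Pointwise

def HasFixity (G Ω : Type*) [Group G] [MulAction G Ω] (k : ℕ) : Prop :=
  (∀ g : G, g ≠ 1 → (fixedBy Ω g).ncard ≤ k) ∧ ∃ g : G, g ≠ 1 ∧ (fixedBy Ω g).ncard = k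

def IsSemiregular (G Ω : Type*) [Group G] [MulAction G Ω] (N : Subgroup G) : Prop :=
  ∀ n ∈ N, n ≠ 1 → ∀ ω : Ω, n • ω ≠ ω

def IsMinimalNormal (G : Type*) [Group G] (N : Subgroup G) : Prop :=
  N.Normal ∧ N ≠ ⊥ ∧ ∀ M : Subgroup G, M.Normal → M ≤ N → M = ⊥ ∨ M = N

def IsOrbitOf (G Ω : Type*) [Group G] [MulAction G Ω] (N : Subgroup G) (s : Set Ω) : Prop :=
  ∃ ω : Ω, s = MulAction.orbit N ω

def IsRegularOn (G Ω : Type*) [Group G] [MulAction G Ω] (R : Subgroup G) : Prop :=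
  (∀ ω ω' : Ω, ∃ r ∈ R, r • ω = ω') ∧ ∀ r ∈ R, r ≠ 1 → ∀ ω : Ω, r • ω ≠ ω

def IsFrobeniusOn (G Ω : Type*) [Group G] [MulAction G Ω] (F : Subgroup G) (s : Set Ω) : Prop :=
  (∃ f ∈ F, f ≠ 1 ∧ ∃ ω ∈ s, f • ω = ω) ∧
  ∀ f ∈ F, f ≠ 1 → ∀ ω ∈ s, ∀ ω' ∈ s, f • ω = ω → f • ω' = ω' → ω = ω'

/-! As `N` is abelian, a nontrivial element of `N` with a fixed point fixes a whole `N`-orbit, so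
fixity 3 forces every orbit to have length 3 and to be the fixed point set of the nontrivial
elements of any of its stabilizers. Two such stabilizers, of order 3, make up `N`. An element of
`G` preserving two orbits acts on `N` as `1` or as inversion: acting trivially on one stabilizer
and inverting the other, it would, up to a factor in `N`, fix one orbit pointwise and a further
point.

By Burnside's lemma there are `8 - 2k` fixed point free elements in `N`, where `k ≥ 2` is the
number of orbits. If `k = 3`, they are `v` and `v⁻¹`, and `⟨v⟩` contradicts the minimality of `N`.
If `k = 4`, an involution of `G` either lies in `N`, which has odd order, or inverts `N` and has a
fixed point in each of the four orbits. If `k = 2`, an element swapping the two orbits has square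
inverting `N`, again by minimality, so `G/N` is cyclic of order 4. -/

section Group

variable {G : Type*} [Group G] {N : Subgroup G}

lemma IsMinimalNormal.isMulCommutative_of_isPGroup [Finite N] {p : ℕ} [Fact p.Prime]
    (hN : IsMinimalNormal G N) (hp : IsPGroup p N) : IsMulCommutative N := by
  obtain ⟨normal, ne_bot, minimal⟩ := hN
  have : Nontrivial N := (Subgroup.nontrivial_iff_ne_bot N).mpr ne_bot
  have center_ne_bot : (Subgroup.center N).map N.subtype ≠ ⊥ := by
    rw [Ne, Subgroup.map_eq_bot_iff_of_injective _ N.subtype_injective]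
    exact (Subgroup.nontrivial_iff_ne_bot _).mp hp.center_nontrivial
  have center_eq : (Subgroup.center N).map N.subtype = N :=
    (minimal _ inferInstance (Subgroup.map_subtype_le _)).resolve_left center_ne_bot
  have center_eq_top : Subgroup.center N = ⊤ := by
    apply Subgroup.map_injective N.subtype_injective
    rw [center_eq, ← MonoidHom.range_eq_map, N.range_subtype]
  exact ⟨⟨fun a b ↦ Subgroup.mem_center_iff.mp (center_eq_top ▸ Subgroup.mem_top b) a⟩⟩

lemma IsMinimalNormal.zpowers_eq_top [N.Normal] (hN : IsMinimalNormal G N) {v : N} (hv : v ≠ 1)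
    (hconj : ∀ g : G, MulAut.conjNormal g v ∈ Subgroup.zpowers v) :
    Subgroup.zpowers v = ⊤ := by
  have normal : ((Subgroup.zpowers v).map N.subtype).Normal := by
    refine ⟨?_⟩
    rintro _ ⟨_, ⟨k, rfl⟩, rfl⟩ g
    refine ⟨MulAut.conjNormal g (v ^ k), ?_, by simp [MulAut.conjNormal_apply]⟩
    rw [map_zpow]
    exact Subgroup.zpow_mem _ (hconj g) k
  apply Subgroup.map_injective N.subtype_injective
  rw [← MonoidHom.range_eq_map, N.range_subtype]
  refine (hN.2.2 _ normal (Subgroup.map_subtype_le _)).resolve_left fun h ↦ hv ?_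
  rw [Subgroup.map_eq_bot_iff_of_injective _ N.subtype_injective] at h
  exact Subgroup.zpowers_eq_bot.mp h

lemma eq_one_or_eq_or_eq_inv_of_card_eq_three {H : Subgroup G} (hH : Nat.card H = 3) {x y : G}
    (hx : x ∈ H) (hx1 : x ≠ 1) (hy : y ∈ H) : y = 1 ∨ y = x ∨ y = x⁻¹ := by
  have hx3 : x ^ 3 = 1 := by
    rw [← hH]
    exact congrArg Subtype.val (pow_card_eq_one' (x := (⟨x, hx⟩ : H)))
  have : Fact (Nat.Prime 3) := ⟨Nat.prime_three⟩
  obtain ⟨k, hk⟩ := mem_zpowers_of_prime_card (g := (⟨x, hx⟩ : H)) (g' := ⟨y, hy⟩) hH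
    (fun h ↦ hx1 (congrArg Subtype.val h))
  obtain rfl : x ^ k = y := congrArg Subtype.val hk
  have hk3 : k % (3 : ℕ) = 0 ∨ k % (3 : ℕ) = 1 ∨ k % (3 : ℕ) = 2 := by omega
  rw [zpow_eq_zpow_emod' k hx3]
  rcases hk3 with h | h | h <;> rw [h]
  · exact .inl (zpow_zero x)
  · exact .inr (.inl (zpow_one x))
  · have sq_mul : x ^ (2 : ℤ) * x = 1 := by rw [← hx3]; exact_mod_cast (pow_succ x 2).symm
    exact .inr (.inr (eq_inv_of_mul_eq_one_left sq_mul))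

lemma inv_ne_self_of_pow_three_eq_one {x : G} (hx : x ^ 3 = 1) (hx1 : x ≠ 1) : x⁻¹ ≠ x := by
  intro h
  have hx2 : x * x = 1 := by rw [← inv_mul_cancel x, h]
  exact hx1 (by simpa [pow_succ, hx2] using hx)

lemma nonempty_mulEquiv_prod_of_isComplement' {A : Type*} [CommGroup A] {H K : Subgroup A}
    (h : H.IsComplement' K) : Nonempty (A ≃* H × K) :=
  ⟨(MulEquiv.ofBijective (H.subtype.coprod K.subtype) h).symm⟩

end Group

section Action

variable {G Ω : Type*} [Group G] [MulAction G Ω] {N : Subgroup G}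

lemma smul_smul_eq_conjNormal_smul_smul [N.Normal] (g : G) (n : N) (ω : Ω) :
    g • n • ω = MulAut.conjNormal g n • g • ω := by
  simp only [Subgroup.smul_def, MulAut.conjNormal_apply, ← mul_smul, inv_mul_cancel_right]

lemma fixedBy_conjNormal [N.Normal] (g : G) (n : N) :
    fixedBy Ω (MulAut.conjNormal g n : G) = g • fixedBy Ω (n : G) := by
  rw [MulAut.conjNormal_apply, smul_fixedBy]

lemma smul_mem_orbit_smul_iff [N.Normal] (g : G) {x y : Ω} :
    g • x ∈ orbit N (g • y) ↔ x ∈ orbit N y := by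
  rw [← smul_orbit_eq_orbit_smul, Set.smul_mem_smul_set_iff]

lemma orbit_subset_fixedBy_of_commute {g : G} (hg : ∀ n ∈ N, Commute g n) {ω : Ω}
    (hω : g • ω = ω) : orbit N ω ⊆ fixedBy Ω g := by
  rintro _ ⟨⟨n, hn⟩, rfl⟩
  change g • n • ω = n • ω
  rw [← mul_smul, hg n hn, mul_smul, hω]

lemma orbit_subset_fixedBy_of_conjNormal_eq_one [N.Normal] {g : G} {ω : Ω}
    (hg : (MulAut.conjNormal g : MulAut N) = 1) (hω : g • ω = ω) :
    orbit N ω ⊆ fixedBy Ω g := by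
  rintro _ ⟨n, rfl⟩
  change g • n • ω = n • ω
  rw [smul_smul_eq_conjNormal_smul_smul, hg, hω, MulAut.one_apply]

lemma smul_inv_smul_eq_of_conjNormal_eq_inv [N.Normal] {g : G} {n : N} {ω : Ω} (hn : n ^ 3 = 1)
    (hgω : g • ω = n • ω) (hgn : MulAut.conjNormal g n = n⁻¹) : g • n⁻¹ • ω = n⁻¹ • ω := by
  have mul_self : n * n = n⁻¹ := eq_inv_of_mul_eq_one_left (by rw [← hn, pow_succ, sq])
  rw [smul_smul_eq_conjNormal_smul_smul, map_inv, hgn, inv_inv, hgω, ← mul_smul, mul_self]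

lemma conjNormal_coe_eq_one [IsMulCommutative N] [N.Normal] (n : N) :
    (MulAut.conjNormal (n : G) : MulAut N) = 1 := by
  ext m
  rw [MulAut.conjNormal_apply, setLike_mul_comm n.2 m.2, mul_inv_cancel_right, MulAut.one_apply]

lemma card_eq_mul_card_orbits [Finite Ω] {m : ℕ} (h : ∀ ω : Ω, (orbit G ω).ncard = m) :
    Nat.card Ω = m * Nat.card (orbitRel.Quotient G Ω) := by
  have := Fintype.ofFinite (orbitRel.Quotient G Ω)
  rw [Nat.card_congr (selfEquivSigmaOrbits G Ω), Nat.card_sigma]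
  simp [Nat.card_coe_set_eq, h, mul_comm]

lemma sum_ncard_fixedBy_eq_card_orbits_mul_card [Fintype G] [Finite Ω] :
    ∑ g : G, (fixedBy Ω g).ncard = Nat.card (orbitRel.Quotient G Ω) * Nat.card G := by
  have := Fintype.ofFinite (orbitRel.Quotient G Ω)
  have (g : G) := Fintype.ofFinite (fixedBy Ω g)
  rw [Nat.card_eq_fintype_card, Nat.card_eq_fintype_card,
    ← sum_card_fixedBy_eq_card_orbits_mul_card_group G Ω]
  exact Finset.sum_congr rfl fun g _ ↦ (Nat.card_coe_set_eq _).symm.trans Nat.card_eq_fintype_card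

lemma mem_orbit_of_notMem_orbit_of_card_orbits_eq_two
    (h : Nat.card (orbitRel.Quotient G Ω) = 2) {x y z : Ω} (hx : x ∉ orbit G z)
    (hy : y ∉ orbit G z) : x ∈ orbit G y := by
  obtain ⟨q, -, hq⟩ := (Nat.card_eq_two_iff' (⟦z⟧ : orbitRel.Quotient G Ω)).mp h
  refine Quotient.exact ((hq ⟦x⟧ fun e ↦ hx ?_).trans (hq ⟦y⟧ fun e ↦ hy ?_).symm)
  all_goals exact Quotient.exact e

lemma inv_mul_smul_mem_orbit_of_card_orbits_eq_two [N.Normal]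
    (hk : Nat.card (orbitRel.Quotient N Ω) = 2) {g x : G} {ω : Ω}
    (hg : g • ω ∉ orbit N ω) (hx : x • ω ∉ orbit N ω) : (g⁻¹ * x) • ω ∈ orbit N ω := by
  rw [← smul_mem_orbit_smul_iff g, mul_smul, smul_inv_smul]
  exact mem_orbit_of_notMem_orbit_of_card_orbits_eq_two hk hx hg

lemma smul_mem_fixedBy_of_ncard_orbit_eq_two [N.Normal] {g : G} {ω : Ω}
    (hω : ω ∈ fixedBy Ω g) (h : (orbit N ω).ncard = 2) (n : N) : n • ω ∈ fixedBy Ω g := by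
  rw [mem_fixedBy] at hω ⊢
  have hgn : g • n • ω ∈ orbit N ω := by
    rw [smul_smul_eq_conjNormal_smul_smul, hω]
    exact mem_orbit ω _
  by_cases hn : n • ω = ω
  · rw [hn, hω]
  have hgn' : g • n • ω ≠ ω := fun e ↦ hn (smul_left_cancel g (e.trans hω.symm))
  obtain ⟨a, b, -, hab⟩ := Set.ncard_eq_two.mp h
  have hself := mem_orbit_self (M := N) ω
  have hnω := mem_orbit ω n
  rw [hab] at hgn hself hnω
  grind

lemma two_dvd_ncard_fixedBy [Finite Ω] [N.Normal] (h : ∀ ω : Ω, (orbit N ω).ncard = 2) (g : G) :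
    2 ∣ (fixedBy Ω g).ncard := by
  let F : SubMulAction N Ω :=
    ⟨fixedBy Ω g, fun n _ hω ↦ smul_mem_fixedBy_of_ncard_orbit_eq_two hω (h _) n⟩
  have hF (ω : F) : (orbit N ω).ncard = 2 := by
    rw [← h ω, ← SubMulAction.val_image_orbit, Set.ncard_image_of_injective _ Subtype.val_injective]
  exact Dvd.intro _ ((card_eq_mul_card_orbits hF).symm.trans (Nat.card_coe_set_eq (fixedBy Ω g)))

lemma nonempty_mulEquiv_perm_of_le_stabilizer {s : Set Ω} [Finite s] {H : Subgroup G}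
    (hs : H ≤ stabilizer G s) (hfaithful : ∀ g ∈ H, s ⊆ fixedBy Ω g → g = 1)
    (hcard : Nat.card H = s.ncard.factorial) :
    Nonempty (H ≃* Equiv.Perm (Fin s.ncard)) := by
  let f : H →* Equiv.Perm s := (toPermHom (stabilizer G s) s).comp (Subgroup.inclusion hs)
  have injective : Function.Injective f := by
    refine (injective_iff_map_eq_one f).mpr fun g hg ↦ Subtype.ext (hfaithful g g.2 fun x hx ↦ ?_)
    exact congrArg Subtype.val (Equiv.congr_fun hg ⟨x, hx⟩)
  have bijective : Function.Bijective f := by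
    have : Finite H := Finite.of_injective f injective
    rw [Nat.bijective_iff_injective_and_card, Nat.card_perm, Nat.card_coe_set_eq]
    exact ⟨injective, hcard⟩
  exact ⟨(MulEquiv.ofBijective f bijective).trans
    (Equiv.permCongrHom (Finite.equivFinOfCardEq (Nat.card_coe_set_eq s)))⟩

lemma stabilizer_ne_bot_of_not_isSemiregular [N.Normal] [IsPretransitive G Ω]
    (h : ¬ IsSemiregular G Ω N) (ω : Ω) : stabilizer N ω ≠ ⊥ := by
  simp only [IsSemiregular, not_forall, not_not] at h
  obtain ⟨n, hn, hn1, ω₀, hω₀⟩ := h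
  obtain ⟨g, rfl⟩ := exists_smul_eq G ω₀ ω
  have fixes : MulAut.conjNormal g (⟨n, hn⟩ : N) ∈ stabilizer N (g • ω₀) := by
    rw [mem_stabilizer_iff, ← smul_smul_eq_conjNormal_smul_smul]
    exact congrArg (g • ·) hω₀
  intro hbot
  rw [hbot, Subgroup.mem_bot, EmbeddingLike.map_eq_one_iff] at fixes
  exact hn1 (congrArg Subtype.val fixes)

lemma ncard_orbit_eq_of_normal [N.Normal] [IsPretransitive G Ω] (x y : Ω) :
    (orbit N x).ncard = (orbit N y).ncard := by
  obtain ⟨g, rfl⟩ := exists_smul_eq G x y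
  rw [← smul_orbit_eq_orbit_smul, Set.ncard_smul_set]

lemma ncard_orbit_ne_one_of_normal [N.Normal] [IsPretransitive G Ω] [FaithfulSMul G Ω]
    (hN : N ≠ ⊥) (ω : Ω) : (orbit N ω).ncard ≠ 1 := by
  refine fun h ↦ hN ((Subgroup.eq_bot_iff_forall N).mpr fun n hn ↦ ?_)
  refine eq_of_smul_eq_smul (α := Ω) fun x ↦ ?_
  rw [ncard_orbit_eq_of_normal ω x, Set.ncard_eq_one] at h
  obtain ⟨a, ha⟩ := h
  have hx : x = a := by simpa [ha] using mem_orbit_self (M := N) x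
  have hnx : n • x = a := by simpa [ha] using mem_orbit x (⟨n, hn⟩ : N)
  rw [hnx, one_smul, hx]

variable [IsMulCommutative N]

lemma orbit_subset_fixedBy_of_mem_stabilizer {n : N} {ω : Ω} (hn : n ∈ stabilizer N ω) :
    orbit N ω ⊆ fixedBy Ω (n : G) :=
  orbit_subset_fixedBy_of_commute (fun _ hm ↦ setLike_mul_comm n.2 hm) hn

lemma conjNormal_mem_stabilizer [N.Normal] {b : G} {ω : Ω} (hb : b • ω ∈ orbit N ω) {n : N}
    (hn : n ∈ stabilizer N ω) : MulAut.conjNormal b n ∈ stabilizer N ω := by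
  have fixes : MulAut.conjNormal b n ∈ stabilizer N (b • ω) := by
    rw [mem_stabilizer_iff, ← smul_smul_eq_conjNormal_smul_smul, mem_stabilizer_iff.mp hn]
  have := orbit_subset_fixedBy_of_mem_stabilizer fixes
  rw [orbit_eq_iff.mpr hb] at this
  exact this (mem_orbit_self ω)

lemma ncard_orbit_eq_three_of_hasFixity [Finite Ω] [FaithfulSMul G Ω] [IsPretransitive G Ω]
    [N.Normal] (hfix : HasFixity G Ω 3) (hN : N ≠ ⊥) (hsemi : ¬ IsSemiregular G Ω N) (ω : Ω) :
    (orbit N ω).ncard = 3 := by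
  obtain ⟨⟨n, hn⟩, hn1⟩ := Subgroup.ne_bot_iff_exists_ne_one.mp
    (stabilizer_ne_bot_of_not_isSemiregular hsemi ω)
  have le_three : (orbit N ω).ncard ≤ 3 :=
    (Set.ncard_le_ncard (orbit_subset_fixedBy_of_mem_stabilizer hn)).trans
      (hfix.1 n fun e ↦ hn1 (Subtype.ext (Subtype.ext e)))
  have ne_zero : (orbit N ω).ncard ≠ 0 := Set.ncard_ne_zero_of_mem (mem_orbit_self ω)
  have ne_one := ncard_orbit_ne_one_of_normal hN ω
  have ne_two : (orbit N ω).ncard ≠ 2 := fun h ↦ by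
    obtain ⟨g, -, hg⟩ := hfix.2
    have := two_dvd_ncard_fixedBy (fun x ↦ (ncard_orbit_eq_of_normal x ω).trans h) g
    omega
  omega

end Action

/-- The configuration to which the theorem reduces: no nontrivial element of `G` has more than
three fixed points, and the subgroup `N` has at least two orbits, all of them of length `3`,
and acts regularly on none of them. -/
structure HasTripleOrbits (Ω : Type*) {G : Type*} [Group G] [MulAction G Ω] (N : Subgroup G) :
    Prop where
  ncard_fixedBy_le (g : G) : g ≠ 1 → (fixedBy Ω g).ncard ≤ 3
  ncard_orbit (ω : Ω) : (orbit N ω).ncard = 3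
  stabilizer_ne_bot (ω : Ω) : stabilizer N ω ≠ ⊥
  exists_notMem_orbit (ω : Ω) : ∃ ω', ω' ∉ orbit N ω

namespace HasTripleOrbits

open scoped IsMulCommutative

variable {G Ω : Type*} [Group G] [MulAction G Ω] {N : Subgroup G}

lemma exists_smul_notMem_orbit [IsPretransitive G Ω] (h : HasTripleOrbits Ω N) (ω : Ω) :
    ∃ g : G, g • ω ∉ orbit N ω := by
  obtain ⟨ω', hω'⟩ := h.exists_notMem_orbit ω
  obtain ⟨g, rfl⟩ := exists_smul_eq G ω ω'
  exact ⟨g, hω'⟩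

lemma eq_one_of_orbit_subset_fixedBy [Finite Ω] (h : HasTripleOrbits Ω N) {g : G} {ω₁ ω₂ : Ω}
    (hg : orbit N ω₁ ⊆ fixedBy Ω g) (hω : ω₂ ∉ orbit N ω₁) (hω₂ : g • ω₂ = ω₂) : g = 1 := by
  by_contra hg1
  have four_le := Set.ncard_le_ncard (Set.insert_subset (mem_fixedBy.mpr hω₂) hg)
  rw [Set.ncard_insert_of_notMem hω, h.ncard_orbit] at four_le
  have := h.ncard_fixedBy_le g hg1
  omega

variable [IsMulCommutative N]

lemma of_hasFixity [Finite Ω] [FaithfulSMul G Ω] [IsPretransitive G Ω] [N.Normal]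
    (hfix : HasFixity G Ω 3) (hN : N ≠ ⊥) (hsemi : ¬ IsSemiregular G Ω N) :
    HasTripleOrbits Ω N where
  ncard_fixedBy_le := hfix.1
  stabilizer_ne_bot := stabilizer_ne_bot_of_not_isSemiregular hsemi
  ncard_orbit := ncard_orbit_eq_three_of_hasFixity hfix hN hsemi
  exists_notMem_orbit ω := by
    by_contra! h
    refine stabilizer_ne_bot_of_not_isSemiregular hsemi ω ((Subgroup.eq_bot_iff_forall _).mpr ?_)
    refine fun n hn ↦ Subtype.ext (eq_of_smul_eq_smul (α := Ω) fun x ↦ ?_)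
    rw [OneMemClass.coe_one, one_smul]
    exact orbit_subset_fixedBy_of_mem_stabilizer hn (h x)

variable [Finite Ω]

lemma fixedBy_eq_orbit (h : HasTripleOrbits Ω N) {n : N} (hn1 : n ≠ 1) {ω : Ω}
    (hn : n ∈ stabilizer N ω) : fixedBy Ω (n : G) = orbit N ω := by
  refine (Set.eq_of_subset_of_ncard_le (orbit_subset_fixedBy_of_mem_stabilizer hn) ?_).symm
  rw [h.ncard_orbit]
  exact h.ncard_fixedBy_le n fun e ↦ hn1 (Subtype.ext e)

lemma ncard_fixedBy_eq_three (h : HasTripleOrbits Ω N) {n : N} (hn1 : n ≠ 1)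
    (hn : (fixedBy Ω (n : G)).Nonempty) : (fixedBy Ω (n : G)).ncard = 3 := by
  obtain ⟨ω, hω⟩ := hn
  rw [h.fixedBy_eq_orbit hn1 hω, h.ncard_orbit]

lemma disjoint_stabilizer (h : HasTripleOrbits Ω N) {ω₁ ω₂ : Ω} (hω : ω₂ ∉ orbit N ω₁) :
    Disjoint (stabilizer N ω₁) (stabilizer N ω₂) := by
  rw [Subgroup.disjoint_def]
  intro n h₁ h₂
  by_contra hn1
  exact hω (h.fixedBy_eq_orbit hn1 h₁ ▸ h₂)

lemma card_stabilizer (h : HasTripleOrbits Ω N) (ω : Ω) : Nat.card (stabilizer N ω) = 3 := by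
  obtain ⟨ω', hω'⟩ := h.exists_notMem_orbit ω
  have dvd : Nat.card (stabilizer N ω) ∣ 3 := by
    rw [← h.ncard_orbit ω', ← index_stabilizer, ← Subgroup.relIndex_bot_left,
      ← (h.disjoint_stabilizer hω').symm.eq_bot, Subgroup.inf_relIndex_right]
    exact Subgroup.relIndex_dvd_index_of_normal _ _
  refine ((Nat.dvd_prime Nat.prime_three).mp dvd).resolve_left fun h1 ↦ ?_
  exact h.stabilizer_ne_bot ω (Subgroup.card_eq_one.mp h1)

lemma card_eq_nine [Nonempty Ω] (h : HasTripleOrbits Ω N) : Nat.card N = 9 := by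
  obtain ⟨ω⟩ := ‹Nonempty Ω›
  rw [← (stabilizer N ω).card_mul_index, index_stabilizer, h.card_stabilizer, h.ncard_orbit]

lemma isComplement'_stabilizer (h : HasTripleOrbits Ω N) {ω₁ ω₂ : Ω} (hω : ω₂ ∉ orbit N ω₁) :
    (stabilizer N ω₁).IsComplement' (stabilizer N ω₂) := by
  have : Nonempty Ω := ⟨ω₁⟩
  have : Finite N := Nat.finite_of_card_ne_zero (by simp [h.card_eq_nine])
  refine Subgroup.isComplement'_of_card_mul_and_disjoint ?_ (h.disjoint_stabilizer hω)
  rw [h.card_stabilizer, h.card_stabilizer, h.card_eq_nine]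

lemma pow_three_eq_one [Nonempty Ω] (h : HasTripleOrbits Ω N) (n : N) : n ^ 3 = 1 := by
  obtain ⟨ω₁⟩ := ‹Nonempty Ω›
  obtain ⟨ω₂, hω⟩ := h.exists_notMem_orbit ω₁
  have fixes (ω : Ω) : n ^ 3 ∈ stabilizer N ω := by
    rw [← h.ncard_orbit ω, ← index_stabilizer]
    exact Subgroup.pow_index_mem _ n
  exact Subgroup.disjoint_def.mp (h.disjoint_stabilizer hω) (fixes ω₁) (fixes ω₂)

lemma inv_ne_self [Nonempty Ω] (h : HasTripleOrbits Ω N) {n : N} (hn : n ≠ 1) : n⁻¹ ≠ n :=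
  inv_ne_self_of_pow_three_eq_one (h.pow_three_eq_one n) hn

lemma ncard_fixedPointFree_add_two_mul_card_orbits [Nonempty Ω] (h : HasTripleOrbits Ω N) :
    {n : N | fixedBy Ω (n : G) = ∅}.ncard + 2 * Nat.card (orbitRel.Quotient N Ω) = 8 := by
  classical
  have : Finite N := Nat.finite_of_card_ne_zero (by simp [h.card_eq_nine])
  have := Fintype.ofFinite N
  have burnside : ∑ n : N, (fixedBy Ω (n : G)).ncard = Nat.card (orbitRel.Quotient N Ω) * 9 := by
    rw [← h.card_eq_nine]
    exact sum_ncard_fixedBy_eq_card_orbits_mul_card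
  have term (n : N) : (fixedBy Ω (n : G)).ncard + (if fixedBy Ω (n : G) = ∅ then 3 else 0) +
      (if n = 1 then 3 else 0) =
        3 + if n = 1 then 3 * Nat.card (orbitRel.Quotient N Ω) else 0 := by
    by_cases hn1 : n = 1
    · have card_eq := card_eq_mul_card_orbits h.ncard_orbit
      simp [hn1, -Nat.card_eq_fintype_card, card_eq, add_comm]
    · rcases (fixedBy Ω (n : G)).eq_empty_or_nonempty with hn | hn
      · simp [hn1, hn]
      · simp [hn1, hn.ne_empty, h.ncard_fixedBy_eq_three hn1 hn]
  have total := Finset.sum_congr (rfl : (Finset.univ : Finset N) = _) fun n _ ↦ term n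
  simp only [Finset.sum_add_distrib, burnside, Finset.sum_ite_eq', Finset.mem_univ, if_true,
    Finset.sum_const, Finset.card_univ, ← Nat.card_eq_fintype_card, h.card_eq_nine,
    ← Finset.sum_filter, smul_eq_mul] at total
  rw [Set.ncard_eq_toFinset_card', Set.toFinset_ofPred]
  omega

lemma exists_mem_stabilizer_smul_eq (h : HasTripleOrbits Ω N) {ω₁ ω₂ ω : Ω}
    (hω : ω₂ ∉ orbit N ω₁) (hω₂ : ω ∈ orbit N ω₂) : ∃ n ∈ stabilizer N ω₁, n • ω₂ = ω := by
  obtain ⟨m, rfl⟩ := hω₂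
  obtain ⟨n, hn, k, hk, rfl⟩ := Subgroup.mem_sup.mp
    ((h.isComplement'_stabilizer hω).sup_eq_top ▸ Subgroup.mem_top m)
  exact ⟨n, hn, by simp only [mul_smul, mem_stabilizer_iff.mp hk]⟩

lemma nonempty_mulEquiv_prod [Nonempty Ω] (h : HasTripleOrbits Ω N) :
    Nonempty (N ≃* Multiplicative (ZMod 3) × Multiplicative (ZMod 3)) := by
  have : Fact (Nat.Prime 3) := ⟨Nat.prime_three⟩
  let ω₁ := Classical.arbitrary Ω
  obtain ⟨ω₂, hω⟩ := h.exists_notMem_orbit ω₁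
  obtain ⟨e⟩ := nonempty_mulEquiv_prod_of_isComplement' (h.isComplement'_stabilizer hω)
  exact ⟨e.trans (MulEquiv.prodCongr
    (mulEquivOfPrimeCardEq (p := 3) (h.card_stabilizer ω₁) (by simp))
    (mulEquivOfPrimeCardEq (p := 3) (h.card_stabilizer ω₂) (by simp)))⟩

variable [N.Normal]

lemma conjNormal_eq_self_or_eq_inv_on_stabilizer (h : HasTripleOrbits Ω N) {b : G} {ω : Ω}
    (hb : b • ω ∈ orbit N ω) :
    (∀ n ∈ stabilizer N ω, MulAut.conjNormal b n = n) ∨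
      ∀ n ∈ stabilizer N ω, MulAut.conjNormal b n = n⁻¹ := by
  obtain ⟨⟨v, hv⟩, hv1⟩ := Subgroup.ne_bot_iff_exists_ne_one.mp (h.stabilizer_ne_bot ω)
  replace hv1 : v ≠ 1 := fun e ↦ hv1 (Subtype.ext e)
  have on_zpowers {n : N} (hn : n ∈ stabilizer N ω) : n = 1 ∨ n = v ∨ n = v⁻¹ :=
    eq_one_or_eq_or_eq_inv_of_card_eq_three (h.card_stabilizer ω) hv hv1 hn
  rcases on_zpowers (conjNormal_mem_stabilizer hb hv) with h1 | hself | hinv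
  · exact absurd (EmbeddingLike.map_eq_one_iff.mp h1) hv1
  · refine .inl fun n hn ↦ ?_
    rcases on_zpowers hn with rfl | rfl | rfl <;> simp only [map_one, map_inv, hself]
  · refine .inr fun n hn ↦ ?_
    rcases on_zpowers hn with rfl | rfl | rfl <;> simp only [map_one, map_inv, hinv, inv_one]

lemma not_centralizes_and_inverts (h : HasTripleOrbits Ω N) {b : G} {ω₁ ω₂ : Ω}
    (hω : ω₂ ∉ orbit N ω₁) (hb₁ : b • ω₁ ∈ orbit N ω₁) (hb₂ : b • ω₂ ∈ orbit N ω₂)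
    (h₁ : ∀ n ∈ stabilizer N ω₁, MulAut.conjNormal b n = n)
    (h₂ : ∀ n ∈ stabilizer N ω₂, MulAut.conjNormal b n = n⁻¹) : False := by
  have : Nonempty Ω := ⟨ω₁⟩
  have hω' : ω₁ ∉ orbit N ω₂ := fun e ↦ hω (mem_orbit_symm.mp e)
  obtain ⟨x, hx, hxb⟩ := h.exists_mem_stabilizer_smul_eq hω hb₂
  let c : G := (x : G)⁻¹ * b
  have conj_c : (MulAut.conjNormal c : MulAut N) = MulAut.conjNormal b := by
    rw [map_mul, map_inv, conjNormal_coe_eq_one, inv_one, one_mul]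
  have hc₂ : c • ω₂ = ω₂ := by rw [mul_smul, ← hxb]; exact inv_smul_smul x ω₂
  have orbit_subset : orbit N ω₂ ⊆ fixedBy Ω c := fun ω hω₂ ↦ by
    obtain ⟨n, hn, rfl⟩ := h.exists_mem_stabilizer_smul_eq hω hω₂
    rw [mem_fixedBy, smul_smul_eq_conjNormal_smul_smul, conj_c, h₁ n hn, hc₂]
  have hc₁ : c • ω₁ ∈ orbit N ω₁ := by
    have fixes : (x : G)⁻¹ • ω₁ = ω₁ := inv_mem hx
    have mem := (smul_mem_orbit_smul_iff ((x : G)⁻¹)).mpr hb₁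
    rwa [fixes, ← mul_smul] at mem
  obtain ⟨v, hv, hvc⟩ := h.exists_mem_stabilizer_smul_eq hω' hc₁
  have hcv : c • v⁻¹ • ω₁ = v⁻¹ • ω₁ :=
    smul_inv_smul_eq_of_conjNormal_eq_inv (h.pow_three_eq_one v) hvc.symm (conj_c ▸ h₂ v hv)
  have notMem : v⁻¹ • ω₁ ∉ orbit N ω₂ := fun e ↦ hω (by simpa using mem_orbit_symm.mp e)
  have hc : c = 1 := h.eq_one_of_orbit_subset_fixedBy orbit_subset notMem hcv
  obtain ⟨⟨w, hw⟩, hw1⟩ := Subgroup.ne_bot_iff_exists_ne_one.mp (h.stabilizer_ne_bot ω₂)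
  refine h.inv_ne_self (fun e ↦ hw1 (Subtype.ext e)) (n := w) ?_
  rw [← h₂ w hw, ← conj_c, hc, map_one, MulAut.one_apply]

lemma conjNormal_eq_one_or_eq_inv (h : HasTripleOrbits Ω N) {b : G} {ω₁ ω₂ : Ω}
    (hω : ω₂ ∉ orbit N ω₁) (hb₁ : b • ω₁ ∈ orbit N ω₁) (hb₂ : b • ω₂ ∈ orbit N ω₂) :
    (MulAut.conjNormal b : MulAut N) = 1 ∨ MulAut.conjNormal b = MulEquiv.inv N := by
  have hω' : ω₁ ∉ orbit N ω₂ := fun e ↦ hω (mem_orbit_symm.mp e)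
  have eq_of_eqOn_stabilizers {f : MulAut N}
      (e₁ : ∀ n ∈ stabilizer N ω₁, MulAut.conjNormal b n = f n)
      (e₂ : ∀ n ∈ stabilizer N ω₂, MulAut.conjNormal b n = f n) : MulAut.conjNormal b = f := by
    ext m
    obtain ⟨n, hn, k, hk, rfl⟩ := Subgroup.mem_sup.mp
      ((h.isComplement'_stabilizer hω).sup_eq_top ▸ Subgroup.mem_top m)
    rw [map_mul, map_mul, e₁ n hn, e₂ k hk]
  rcases h.conjNormal_eq_self_or_eq_inv_on_stabilizer hb₁ with h₁ | h₁ <;>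
    rcases h.conjNormal_eq_self_or_eq_inv_on_stabilizer hb₂ with h₂ | h₂
  · exact .inl (eq_of_eqOn_stabilizers h₁ h₂)
  · exact (h.not_centralizes_and_inverts hω hb₁ hb₂ h₁ h₂).elim
  · exact (h.not_centralizes_and_inverts hω' hb₂ hb₁ h₂ h₁).elim
  · exact .inr (eq_of_eqOn_stabilizers h₁ h₂)

lemma smul_mem_orbit_of_conjNormal_mem_stabilizer (h : HasTripleOrbits Ω N) {b : G} {n : N}
    {ω : Ω} (hn1 : n ≠ 1) (hn : n ∈ stabilizer N ω)
    (hbn : MulAut.conjNormal b n ∈ stabilizer N ω) : b • ω ∈ orbit N ω := by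
  have ne_one : MulAut.conjNormal b n ≠ 1 := EmbeddingLike.map_ne_one_iff.mpr hn1
  rw [← h.fixedBy_eq_orbit ne_one hbn, mem_fixedBy]
  change MulAut.conjNormal b n • b • ω = b • ω
  rw [← smul_smul_eq_conjNormal_smul_smul, mem_stabilizer_iff.mp hn]

lemma smul_mem_orbit (h : HasTripleOrbits Ω N) {b : G}
    (hb : (MulAut.conjNormal b : MulAut N) = 1 ∨ MulAut.conjNormal b = MulEquiv.inv N) (ω : Ω) :
    b • ω ∈ orbit N ω := by
  obtain ⟨⟨n, hn⟩, hn1⟩ := Subgroup.ne_bot_iff_exists_ne_one.mp (h.stabilizer_ne_bot ω)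
  refine h.smul_mem_orbit_of_conjNormal_mem_stabilizer (fun e ↦ hn1 (Subtype.ext e)) hn ?_
  rcases hb with hb | hb <;> rw [hb]
  · exact hn
  · exact inv_mem hn

lemma card_orbits_le_three_of_conjNormal_eq_inv (h : HasTripleOrbits Ω N) {b : G} (hb1 : b ≠ 1)
    (hb : (MulAut.conjNormal b : MulAut N) = MulEquiv.inv N) :
    Nat.card (orbitRel.Quotient N Ω) ≤ 3 := by
  have surjective : Function.Surjective
      (fun ω : fixedBy Ω b ↦ (Quotient.mk _ ω.1 : orbitRel.Quotient N Ω)) := by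
    refine Quotient.ind fun ω ↦ ?_
    have : Nonempty Ω := ⟨ω⟩
    obtain ⟨n, hn⟩ := h.smul_mem_orbit (.inr hb) ω
    refine ⟨⟨n⁻¹ • ω, smul_inv_smul_eq_of_conjNormal_eq_inv (h.pow_three_eq_one n) hn.symm ?_⟩,
      Quotient.sound (mem_orbit ω n⁻¹)⟩
    rw [hb]
    rfl
  exact (Nat.card_le_card_of_surjective _ surjective).trans (h.ncard_fixedBy_le b hb1)

lemma eq_one_of_forall_conjNormal_mem_zpowers [Nonempty Ω] (h : HasTripleOrbits Ω N)
    (hN : IsMinimalNormal G N) {v : N}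
    (hv : ∀ g : G, MulAut.conjNormal g v ∈ Subgroup.zpowers v) : v = 1 := by
  by_contra hv1
  have card_le : Nat.card (Subgroup.zpowers v) ≤ 3 := by
    rw [Nat.card_zpowers]
    exact orderOf_le_of_pow_eq_one three_pos (h.pow_three_eq_one v)
  rw [hN.zpowers_eq_top hv1 hv, Subgroup.card_top, h.card_eq_nine] at card_le
  omega

lemma card_orbits_ne_three [Nonempty Ω] (h : HasTripleOrbits Ω N) (hN : IsMinimalNormal G N) :
    Nat.card (orbitRel.Quotient N Ω) ≠ 3 := by
  intro hk
  have ncard_free : {n : N | fixedBy Ω (n : G) = ∅}.ncard = 2 := by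
    have := h.ncard_fixedPointFree_add_two_mul_card_orbits
    omega
  obtain ⟨v, hv⟩ := Set.nonempty_of_ncard_ne_zero (ncard_free ▸ two_ne_zero)
  have hv1 : v ≠ 1 := by
    rintro rfl
    exact Set.empty_ne_univ (hv.symm.trans (fixedBy_one_eq_univ Ω G))
  have free_eq : {v, v⁻¹} = {n : N | fixedBy Ω (n : G) = ∅} := by
    refine Set.eq_of_subset_of_ncard_le (Set.pair_subset hv ?_) ?_
      (Set.finite_of_ncard_ne_zero (ncard_free ▸ two_ne_zero))
    · simpa [fixedBy_inv] using hv
    · rw [ncard_free, Set.ncard_pair (h.inv_ne_self hv1).symm]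
  refine hv1 (h.eq_one_of_forall_conjNormal_mem_zpowers hN fun g ↦ ?_)
  have hgv : MulAut.conjNormal g v ∈ ({v, v⁻¹} : Set N) :=
    free_eq ▸ (fixedBy_conjNormal g v).trans (by rw [hv, Set.smul_set_empty])
  rcases hgv with hgv | hgv <;> rw [hgv]
  · exact Subgroup.mem_zpowers v
  · exact inv_mem (Subgroup.mem_zpowers v)

lemma conjNormal_eq_one_or_eq_inv_of_sq_eq_one (h : HasTripleOrbits Ω N)
    (hfix : ∀ n : N, (fixedBy Ω (n : G)).Nonempty) {g : G}
    (hg : (MulAut.conjNormal g : MulAut N) ^ 2 = 1) :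
    (MulAut.conjNormal g : MulAut N) = 1 ∨ MulAut.conjNormal g = MulEquiv.inv N := by
  by_contra! hne
  have involutive (n : N) : MulAut.conjNormal g (MulAut.conjNormal g n) = n := by
    rw [← MulAut.mul_apply, ← sq, hg, MulAut.one_apply]
  obtain ⟨a, ha⟩ : ∃ a : N, MulAut.conjNormal g a ≠ a⁻¹ := by
    by_contra! hall
    exact hne.2 (MulEquiv.ext hall)
  obtain ⟨b, hb⟩ : ∃ b : N, MulAut.conjNormal g b ≠ b := by
    by_contra! hall
    exact hne.1 (MulEquiv.ext hall)
  let u := a * MulAut.conjNormal g a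
  let v := b * (MulAut.conjNormal g b)⁻¹
  have hu1 : u ≠ 1 := fun e ↦ ha (eq_inv_of_mul_eq_one_right e)
  have hv1 : v ≠ 1 := fun e ↦ hb (mul_inv_eq_one.mp e).symm
  have hu : MulAut.conjNormal g u = u := by simp only [u, map_mul, involutive, mul_comm]
  have hv : MulAut.conjNormal g v = v⁻¹ := by simp [v, involutive]
  obtain ⟨ω₁, hω₁⟩ := hfix u
  obtain ⟨ω₂, hω₂⟩ := hfix v
  have : Nonempty Ω := ⟨ω₁⟩
  have hω : ω₂ ∉ orbit N ω₁ := fun hmem ↦ by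
    have hvω₁ : v ∈ stabilizer N ω₁ :=
      orbit_subset_fixedBy_of_mem_stabilizer hω₂ (mem_orbit_symm.mp hmem)
    refine h.inv_ne_self hv1 (hv.symm.trans ?_)
    rcases eq_one_or_eq_or_eq_inv_of_card_eq_three (h.card_stabilizer ω₁) hω₁ hu1 hvω₁
      with e | e | e <;> rw [e] <;> simp only [map_one, map_inv, hu]
  rcases h.conjNormal_eq_one_or_eq_inv hω
    (h.smul_mem_orbit_of_conjNormal_mem_stabilizer hu1 hω₁ (hu.symm ▸ hω₁))
    (h.smul_mem_orbit_of_conjNormal_mem_stabilizer hv1 hω₂ (hv.symm ▸ inv_mem hω₂)) with e | e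
  · exact hne.1 e
  · exact hne.2 e

lemma ker_conjNormal [Nonempty Ω] (h : HasTripleOrbits Ω N) :
    (MulAut.conjNormal : G →* MulAut N).ker = N := by
  ext c
  refine ⟨fun hc ↦ ?_, fun hc ↦ conjNormal_coe_eq_one (⟨c, hc⟩ : N)⟩
  rw [MonoidHom.mem_ker] at hc
  obtain ⟨ω₁⟩ := ‹Nonempty Ω›
  obtain ⟨ω₂, hω⟩ := h.exists_notMem_orbit ω₁
  have hω' : ω₁ ∉ orbit N ω₂ := fun e ↦ hω (mem_orbit_symm.mp e)
  obtain ⟨m, hm, hmc⟩ := h.exists_mem_stabilizer_smul_eq hω (h.smul_mem_orbit (.inl hc) ω₂)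
  obtain ⟨k, hk, hkc⟩ := h.exists_mem_stabilizer_smul_eq hω' (h.smul_mem_orbit (.inl hc) ω₁)
  let d : G := (↑(m * k) : G)⁻¹ * c
  have hd : (MulAut.conjNormal d : MulAut N) = 1 := by
    rw [map_mul, map_inv, conjNormal_coe_eq_one, hc, inv_one, one_mul]
  have hd₁ : d • ω₁ = ω₁ := by
    rw [mul_smul, inv_smul_eq_iff, ← hkc, mul_comm, ← Subgroup.smul_def, mul_smul, hm]
  have hd₂ : d • ω₂ = ω₂ := by
    rw [mul_smul, inv_smul_eq_iff, ← hmc, ← Subgroup.smul_def, mul_smul, hk]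
  have hd_one : d = 1 :=
    h.eq_one_of_orbit_subset_fixedBy (orbit_subset_fixedBy_of_conjNormal_eq_one hd hd₁) hω hd₂
  rw [← inv_mul_eq_one.mp hd_one]
  exact (m * k).2

lemma card_orbits_ne_four [Finite G] [IsPretransitive G Ω] [Nonempty Ω]
    (h : HasTripleOrbits Ω N) : Nat.card (orbitRel.Quotient N Ω) ≠ 4 := by
  intro hk
  have : Fact (Nat.Prime 2) := ⟨Nat.prime_two⟩
  have two_dvd : 2 ∣ Nat.card G := by
    refine Dvd.dvd.trans ?_ (stabilizer G (Classical.arbitrary Ω)).index_dvd_card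
    rw [index_stabilizer_of_transitive, card_eq_mul_card_orbits h.ncard_orbit, hk]
    norm_num
  obtain ⟨g, hg⟩ := exists_prime_orderOf_dvd_card' 2 two_dvd
  have hg1 : g ≠ 1 := fun e ↦ by simp [e] at hg
  have all_fix (n : N) : (fixedBy Ω (n : G)).Nonempty := by
    have free_eq : {n : N | fixedBy Ω (n : G) = ∅} = ∅ := by
      rw [← Set.ncard_eq_zero]
      have := h.ncard_fixedPointFree_add_two_mul_card_orbits
      omega
    exact Set.nonempty_iff_ne_empty.mpr fun hn ↦ Set.eq_empty_iff_forall_notMem.mp free_eq n hn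
  rcases h.conjNormal_eq_one_or_eq_inv_of_sq_eq_one all_fix (g := g)
    (by rw [← map_pow, ← hg, pow_orderOf_eq_one, map_one]) with e | e
  · have mem : g ∈ N := by rw [← h.ker_conjNormal]; exact e
    have dvd := Subgroup.orderOf_dvd_natCard N mem
    rw [hg, h.card_eq_nine] at dvd
    omega
  · have := h.card_orbits_le_three_of_conjNormal_eq_inv hg1 e
    omega

lemma card_orbits_eq_two [Finite G] [IsPretransitive G Ω] [Nonempty Ω]
    (h : HasTripleOrbits Ω N) (hN : IsMinimalNormal G N) :
    Nat.card (orbitRel.Quotient N Ω) = 2 := by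
  have ne_three := h.card_orbits_ne_three hN
  have ne_four := h.card_orbits_ne_four
  have := h.ncard_fixedPointFree_add_two_mul_card_orbits
  obtain ⟨ω₁⟩ := ‹Nonempty Ω›
  obtain ⟨ω₂, hω⟩ := h.exists_notMem_orbit ω₁
  have one_lt : 1 < Nat.card (orbitRel.Quotient N Ω) :=
    Finite.one_lt_card_iff_nontrivial.mpr ⟨⟦ω₂⟧, ⟦ω₁⟧, fun e ↦ hω (Quotient.exact e)⟩
  omega

lemma conjNormal_eq_one_or_eq_inv_of_smul_mem_orbit (h : HasTripleOrbits Ω N)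
    (hk : Nat.card (orbitRel.Quotient N Ω) = 2) {b : G} {ω : Ω} (hb : b • ω ∈ orbit N ω) :
    (MulAut.conjNormal b : MulAut N) = 1 ∨ MulAut.conjNormal b = MulEquiv.inv N := by
  obtain ⟨ω', hω'⟩ := h.exists_notMem_orbit ω
  refine h.conjNormal_eq_one_or_eq_inv hω' hb
    (mem_orbit_of_notMem_orbit_of_card_orbits_eq_two hk ?_ hω')
  rwa [← orbit_eq_iff.mpr hb, smul_mem_orbit_smul_iff]

lemma exists_conjNormal_eq_or_eq_mul (h : HasTripleOrbits Ω N)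
    (hk : Nat.card (orbitRel.Quotient N Ω) = 2) {g : G} {ω : Ω} (hg : g • ω ∉ orbit N ω) (x : G) :
    ∃ f : MulAut N, (f = 1 ∨ f = MulEquiv.inv N) ∧
      (MulAut.conjNormal x = f ∨ MulAut.conjNormal x = MulAut.conjNormal g * f) := by
  by_cases hx : x • ω ∈ orbit N ω
  · exact ⟨_, h.conjNormal_eq_one_or_eq_inv_of_smul_mem_orbit hk hx, .inl rfl⟩
  · refine ⟨_, h.conjNormal_eq_one_or_eq_inv_of_smul_mem_orbit hk
      (inv_mul_smul_mem_orbit_of_card_orbits_eq_two hk hg hx), .inr ?_⟩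
    rw [← map_mul, mul_inv_cancel_left]

lemma conjNormal_sq_eq_inv (h : HasTripleOrbits Ω N) (hN : IsMinimalNormal G N)
    (hk : Nat.card (orbitRel.Quotient N Ω) = 2) {g : G} {ω : Ω} (hg : g • ω ∉ orbit N ω) :
    (MulAut.conjNormal g : MulAut N) ^ 2 = MulEquiv.inv N := by
  have : Nonempty Ω := ⟨ω⟩
  have sq_smul_mem : (g ^ 2) • ω ∈ orbit N ω := by
    refine mem_orbit_of_notMem_orbit_of_card_orbits_eq_two (z := g • ω) hk ?_
      (fun e ↦ hg (mem_orbit_symm.mp e))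
    rwa [sq, mul_smul, smul_mem_orbit_smul_iff]
  have dichotomy := h.conjNormal_eq_one_or_eq_inv_of_smul_mem_orbit hk sq_smul_mem
  rw [map_pow] at dichotomy
  refine dichotomy.resolve_left fun hsq ↦ ?_
  obtain ⟨⟨n, hn⟩, hn1⟩ := Subgroup.ne_bot_iff_exists_ne_one.mp (h.stabilizer_ne_bot ω)
  let u := n * MulAut.conjNormal g n
  have hgu : MulAut.conjNormal g u = u := by
    have involutive : MulAut.conjNormal g (MulAut.conjNormal g n) = n := by
      rw [← MulAut.mul_apply, ← sq, hsq, MulAut.one_apply]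
    rw [map_mul, involutive, mul_comm]
  have hu : u = 1 := by
    refine h.eq_one_of_forall_conjNormal_mem_zpowers hN fun x ↦ ?_
    obtain ⟨f, rfl | rfl, hx | hx⟩ := h.exists_conjNormal_eq_or_eq_mul hk hg x <;>
      simp [hx, hgu]
  refine hg (h.smul_mem_orbit_of_conjNormal_mem_stabilizer (fun e ↦ hn1 (Subtype.ext e)) hn ?_)
  rw [eq_inv_of_mul_eq_one_right hu]
  exact inv_mem hn

lemma orderOf_conjNormal_eq_four (h : HasTripleOrbits Ω N) (hN : IsMinimalNormal G N)
    (hk : Nat.card (orbitRel.Quotient N Ω) = 2) {g : G} {ω : Ω} (hg : g • ω ∉ orbit N ω) :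
    orderOf (MulAut.conjNormal g : MulAut N) = 4 := by
  have : Nonempty Ω := ⟨ω⟩
  have : Fact (Nat.Prime 2) := ⟨Nat.prime_two⟩
  have hsq := h.conjNormal_sq_eq_inv hN hk hg
  obtain ⟨n, hn1⟩ := Subgroup.ne_bot_iff_exists_ne_one.mp hN.2.1
  refine orderOf_eq_prime_pow (p := 2) (n := 1) (fun e ↦ ?_) ?_
  · refine h.inv_ne_self hn1 ?_
    rw [pow_one, hsq] at e
    exact DFunLike.congr_fun e n
  · rw [pow_succ, pow_one, pow_mul, hsq]
    ext m
    simp [sq]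

lemma range_conjNormal (h : HasTripleOrbits Ω N) (hN : IsMinimalNormal G N)
    (hk : Nat.card (orbitRel.Quotient N Ω) = 2) {g : G} {ω : Ω} (hg : g • ω ∉ orbit N ω) :
    (MulAut.conjNormal : G →* MulAut N).range = Subgroup.zpowers (MulAut.conjNormal g) := by
  have hsq := h.conjNormal_sq_eq_inv hN hk hg
  have mem := Subgroup.mem_zpowers (MulAut.conjNormal g : MulAut N)
  refine le_antisymm ?_ (Subgroup.zpowers_le.mpr ⟨g, rfl⟩)
  rintro _ ⟨x, rfl⟩
  obtain ⟨f, hf, hx⟩ := h.exists_conjNormal_eq_or_eq_mul hk hg x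
  have hf_mem : f ∈ Subgroup.zpowers (MulAut.conjNormal g : MulAut N) := by
    rcases hf with rfl | rfl
    · exact one_mem _
    · exact hsq ▸ pow_mem mem 2
  rcases hx with hx | hx <;> rw [hx]
  · exact hf_mem
  · exact mul_mem mem hf_mem

lemma index_eq_four [IsPretransitive G Ω] [Nonempty Ω] (h : HasTripleOrbits Ω N)
    (hN : IsMinimalNormal G N) (hk : Nat.card (orbitRel.Quotient N Ω) = 2) : N.index = 4 := by
  obtain ⟨g, hg⟩ := h.exists_smul_notMem_orbit (Classical.arbitrary Ω)
  rw [← h.ker_conjNormal, Subgroup.index_ker, h.range_conjNormal hN hk hg, Nat.card_zpowers,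
    h.orderOf_conjNormal_eq_four hN hk hg]

lemma card_eq_thirtySix [IsPretransitive G Ω] [Nonempty Ω] (h : HasTripleOrbits Ω N)
    (hN : IsMinimalNormal G N) (hk : Nat.card (orbitRel.Quotient N Ω) = 2) : Nat.card G = 36 := by
  rw [← N.card_mul_index, h.card_eq_nine, h.index_eq_four hN hk]

lemma isCyclic_quotient [IsPretransitive G Ω] [Nonempty Ω] (h : HasTripleOrbits Ω N)
    (hN : IsMinimalNormal G N) (hk : Nat.card (orbitRel.Quotient N Ω) = 2) : IsCyclic (G ⧸ N) := by
  obtain ⟨g, hg⟩ := h.exists_smul_notMem_orbit (Classical.arbitrary Ω)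
  have : IsCyclic (MulAut.conjNormal : G →* MulAut N).range := by
    rw [h.range_conjNormal hN hk hg]
    infer_instance
  let e := (QuotientGroup.quotientMulEquivOfEq h.ker_conjNormal.symm).trans
    (QuotientGroup.quotientKerEquivRange (MulAut.conjNormal : G →* MulAut N))
  exact isCyclic_of_injective e.toMonoidHom e.injective

lemma exists_isComplement'_mulEquiv [IsPretransitive G Ω] [Nonempty Ω] (h : HasTripleOrbits Ω N)
    (hN : IsMinimalNormal G N) (hk : Nat.card (orbitRel.Quotient N Ω) = 2) :
    ∃ K : Subgroup G, N.IsComplement' K ∧ Nonempty (K ≃* Multiplicative (ZMod 4)) := by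
  obtain ⟨K, hK⟩ := Subgroup.exists_right_complement'_of_coprime (N := N)
    (by rw [h.card_eq_nine, h.index_eq_four hN hk]; norm_num)
  have := h.isCyclic_quotient hN hk
  let e := hK.symm.QuotientMulEquiv
  have : IsCyclic K := isCyclic_of_injective e.symm.toMonoidHom e.symm.injective
  have card_K : Nat.card K = 4 := by rw [← hK.symm.index_eq_card, h.index_eq_four hN hk]
  exact ⟨K, hK, ⟨mulEquivOfCyclicCardEq (by simp [card_K])⟩⟩

lemma nonempty_stabilizer_mulEquiv_perm [IsPretransitive G Ω] (h : HasTripleOrbits Ω N)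
    (hN : IsMinimalNormal G N) (hk : Nat.card (orbitRel.Quotient N Ω) = 2) (ω : Ω) :
    Nonempty (stabilizer G ω ≃* Equiv.Perm (Fin 3)) := by
  have : Nonempty Ω := ⟨ω⟩
  obtain ⟨ω', hω'⟩ := h.exists_notMem_orbit ω
  have le_stabilizer : stabilizer G ω ≤ stabilizer G (orbit N ω') := fun g hg ↦ by
    have hgω : g • ω ∈ orbit N ω := by rw [mem_stabilizer_iff.mp hg]; exact mem_orbit_self ω
    have hgω' : g • ω' ∈ orbit N ω' :=
      h.smul_mem_orbit (h.conjNormal_eq_one_or_eq_inv_of_smul_mem_orbit hk hgω) ω'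
    rw [mem_stabilizer_iff, smul_orbit_eq_orbit_smul, orbit_eq_iff.mpr hgω']
  have card_stabilizer : Nat.card (stabilizer G ω) = (orbit N ω').ncard.factorial := by
    have card_mul := (stabilizer G ω).card_mul_index
    rw [index_stabilizer_of_transitive, card_eq_mul_card_orbits h.ncard_orbit, hk,
      h.card_eq_thirtySix hN hk] at card_mul
    simp only [h.ncard_orbit, Nat.factorial]
    omega
  have equiv_perm := nonempty_mulEquiv_perm_of_le_stabilizer le_stabilizer
    (fun g hg hfix ↦ h.eq_one_of_orbit_subset_fixedBy hfix
      (fun e ↦ hω' (mem_orbit_symm.mp e)) hg) card_stabilizer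
  rwa [h.ncard_orbit] at equiv_perm

end HasTripleOrbits

theorem stmt_8 (G Ω : Type*) [Group G] [Finite G] [MulAction G Ω] [Finite Ω]
    [FaithfulSMul G Ω] [IsPretransitive G Ω] (hfix : HasFixity G Ω 3)
    (N : Subgroup G) (hmin : IsMinimalNormal G N)
    (p : ℕ) (n : ℕ) (hp : p.Prime) (hcard : Nat.card N = p ^ n)
    (hnotsemi : ¬ IsSemiregular G Ω N) :
    Nat.card Ω = 6 ∧ Nat.card N = 9 ∧ (∀ ω : Ω, (MulAction.orbit N ω).ncard = 3) ∧
      Nat.card G = 36 ∧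
      (∃ H K : Subgroup G, H.Normal ∧ Nat.card H = 9 ∧
        Nonempty (H ≃* (Multiplicative (ZMod 3) × Multiplicative (ZMod 3))) ∧
        Nonempty (K ≃* Multiplicative (ZMod 4)) ∧ H ⊓ K = ⊥ ∧ H ⊔ K = ⊤) ∧
      ∀ ω : Ω, Nonempty (stabilizer G ω ≃* Equiv.Perm (Fin 3)) := by
  have : Fact p.Prime := ⟨hp⟩
  have : N.Normal := hmin.1
  have : IsMulCommutative N := hmin.isMulCommutative_of_isPGroup (IsPGroup.of_card hcard)
  have : Nonempty Ω := not_isEmpty_iff.mp fun _ ↦ hnotsemi fun _ _ _ ω ↦ isEmptyElim ω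
  have h : HasTripleOrbits Ω N := .of_hasFixity hfix hmin.2.1 hnotsemi
  have two_orbits : Nat.card (orbitRel.Quotient N Ω) = 2 := h.card_orbits_eq_two hmin
  obtain ⟨K, hK, K_equiv⟩ := h.exists_isComplement'_mulEquiv hmin two_orbits
  exact ⟨by rw [card_eq_mul_card_orbits h.ncard_orbit, two_orbits], h.card_eq_nine, h.ncard_orbit,
    h.card_eq_thirtySix hmin two_orbits,
    ⟨N, K, hmin.1, h.card_eq_nine, h.nonempty_mulEquiv_prod, K_equiv, hK.disjoint.eq_bot,
      hK.sup_eq_top⟩,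
    h.nonempty_stabilizer_mulEquiv_perm hmin two_orbits⟩
end

section
/- Let G be a finite group acting transitively and faithfully with fixity 3 on a finite set Ω, and let N be a minimal normal subgroup of prime power order acting semi-regularly such that there are exactly three N-orbits. Then G has a normal subgroup that either acts regularly on Ω, or has index 3 or 6 in G, has exactly three orbits on Ω, and acts as a Frobenius group on each of its orbits. -/
open MulAction Pointwise

/-!
Let `K` be the kernel of `G` on the three `N`-orbits. On average, an element of a coset of `N` in
`K` has three fixed points, so by the fixity bound every element of `K` outside `N` has exactly
three; since the nonempty sets of its fixed points in the various `N`-orbits have equal size, it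
fixes either one point in each orbit or three points in one orbit.

If the second kind does not occur, then `K` is a Frobenius group on each orbit, unless `K = N`, when
the preimage of the alternating group on the orbits is regular. If it does occur, consider a point
stabilizer `H` in `K`, a complement of `N`, acting on an orbit not containing the point. The
elements of the second kind in `H` are the derangements of this action, and comparing the
orbit-counting lemma on `Ω` and on this orbit shows that there are exactly two of them. With `1`
they form a self-centralizing subgroup of order three of `H`, so `K / N` has such a subgroup `P`,
normal in `G / N`. As no element outside `K` that permutes the orbits cyclically has its cube of the
second kind, `P` gives rise to a normal subgroup of `G / N` of order three that permutes the orbits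
cyclically, and its preimage is regular.
-/

theorem ncard_eq_ncard_mul_of_fibers {α β : Type*} [Finite α] [Finite β] {f : α → β} {s : Set α}
    {t : Set β} (hf : Set.MapsTo f s t) {k : ℕ} (hk : ∀ b ∈ t, {a ∈ s | f a = b}.ncard = k) :
    s.ncard = t.ncard * k := by
  classical
  have := Fintype.ofFinite α
  have := Fintype.ofFinite β
  rw [Set.ncard_eq_toFinset_card', Set.ncard_eq_toFinset_card',
    Finset.card_eq_sum_card_fiberwise (f := f) (t := t.toFinset) (by simpa using hf),
    Finset.sum_const_nat]
  intro b hb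
  rw [← hk b (by simpa using hb), Set.ncard_eq_toFinset_card']
  congr 1
  ext a
  simp

section NormalComplement

variable {X : Type*} [Group X]

theorem index_centralizer_dvd_card_mulAut (P : Subgroup X) [P.Normal] :
    (Subgroup.centralizer (P : Set X)).index ∣ Nat.card (MulAut P) := by
  rw [← Subgroup.relIndex_top_right, ← Subgroup.normalizer_eq_top P, Subgroup.relIndex,
    ← Subgroup.normalizerMonoidHom_ker, Subgroup.index_ker]
  exact Subgroup.card_subgroup_dvd_card _

theorem fixedPoints_nonempty_of_index_eq_pow {α : Type*} [MulAction X α] {q m : ℕ}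
    (hq : q.Prime) {T : Subgroup X} (hT : ∀ t ∈ T, ∀ a : α, t • a = a) (hidx : T.index = q ^ m)
    (hα : ¬ q ∣ Nat.card α) : (fixedPoints X α).Nonempty := by
  have : Fact q.Prime := ⟨hq⟩
  have hker : T ≤ (toPermHom X α).ker := fun t ht => Equiv.ext (hT t ht)
  obtain ⟨k, -, hk⟩ := (Nat.dvd_prime_pow hq).mp (hidx ▸ Subgroup.index_dvd_of_le hker)
  have hrange : IsPGroup q (toPermHom X α).range :=
    IsPGroup.of_card ((Subgroup.index_ker _).symm.trans hk)
  obtain ⟨a, ha⟩ := hrange.nonempty_fixed_point_of_prime_not_dvd_card α hα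
  exact ⟨a, fun x => ha ⟨toPermHom X α x, x, rfl⟩⟩

theorem zpowers_eq_of_mem_of_card_prime {p : ℕ} (hp : p.Prime)
    {R : Subgroup X} (hR : Nat.card R = p) {g : X} (hg : g ∈ R) (hg1 : g ≠ 1) :
    Subgroup.zpowers g = R := by
  have : Fact p.Prime := ⟨hp⟩
  have : Finite R := Nat.finite_of_card_ne_zero (hR ▸ hp.ne_zero)
  refine Subgroup.eq_of_le_of_card_ge (Subgroup.zpowers_le.mpr hg) ?_
  have hdvd := Subgroup.card_dvd_of_le (Subgroup.zpowers_le.mpr hg)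
  rw [hR, Nat.card_zpowers, Nat.dvd_prime hp, orderOf_eq_one_iff] at hdvd
  rw [hR, Nat.card_zpowers, hdvd.resolve_left hg1]

/-- The subgroups of order `p` of `T` other than `P`, with the ambient group acting by
conjugation. If `P` has order `p` and `T` has order `p ^ 2`, these are the complements of `P`
in `T`. -/
def primeSubgroupsNe (p : ℕ) (P T : Subgroup X) [hP : P.Normal]
    [hT : T.Normal] : SubMulAction (ConjAct X) (Subgroup X) where
  carrier := {R | R ≤ T ∧ Nat.card R = p ∧ R ≠ P}
  smul_mem' g R := by
    rintro ⟨hRT, hR, hRP⟩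
    refine ⟨?_, ?_, fun h => hRP ?_⟩
    · rw [← hT.conjAct g]
      exact Subgroup.pointwise_smul_le_pointwise_smul_iff.mpr hRT
    · rw [← hR]
      exact Nat.card_congr (Subgroup.equivSMul g R).symm.toEquiv
    · exact smul_left_cancel g (h.trans (hP.conjAct g).symm)

theorem primeSubgroupsNe_fiber {p : ℕ} (hp : p.Prime) {P T R : Subgroup X} [P.Normal] [T.Normal]
    (hP : Nat.card P = p) (hR : R ∈ primeSubgroupsNe p P T) :
    {g ∈ (T : Set X) \ P | Subgroup.zpowers g = R} = (R : Set X) \ {1} := by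
  obtain ⟨hRT, hR, hRP⟩ := hR
  ext g
  constructor
  · rintro ⟨⟨-, hgP⟩, rfl⟩
    exact ⟨Subgroup.mem_zpowers g, fun h => hgP (h ▸ P.one_mem)⟩
  · rintro ⟨hg, hg1⟩
    have hgR := zpowers_eq_of_mem_of_card_prime hp hR hg hg1
    exact ⟨⟨hRT hg, fun hgP =>
      hRP (hgR.symm.trans (zpowers_eq_of_mem_of_card_prime hp hP hgP hg1))⟩, hgR⟩

theorem ncard_primeSubgroupsNe [Finite X] {p : ℕ} (hp : p.Prime) {P T : Subgroup X} [P.Normal]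
    [T.Normal] (hPT : P ≤ T) (hP : Nat.card P = p) (hT : Nat.card T = p ^ 2)
    (hpow : ∀ g ∈ T, g ∉ P → g ^ p = 1) :
    (primeSubgroupsNe p P T : Set (Subgroup X)).ncard = p := by
  have : Fact p.Prime := ⟨hp⟩
  have hmaps : Set.MapsTo Subgroup.zpowers ((T : Set X) \ P) (primeSubgroupsNe p P T) := by
    rintro g ⟨hgT, hgP⟩
    refine ⟨Subgroup.zpowers_le.mpr hgT, ?_, fun h => hgP (h ▸ Subgroup.mem_zpowers g)⟩
    rw [Nat.card_zpowers]
    exact orderOf_eq_prime (hpow g hgT hgP) fun h => hgP (h ▸ P.one_mem)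
  have hcount := ncard_eq_ncard_mul_of_fibers hmaps (k := p - 1) fun R hR => by
    rw [primeSubgroupsNe_fiber hp hP hR, Set.ncard_sdiff (by simp), Set.ncard_singleton]
    exact congrArg (· - 1) hR.2.1
  have hdiff : ((T : Set X) \ P : Set X).ncard = p * (p - 1) := by
    rw [Set.ncard_sdiff hPT]
    change Nat.card T - Nat.card P = _
    rw [hT, hP, sq, Nat.mul_sub_one]
  exact Nat.eq_of_mul_eq_mul_right (Nat.sub_pos_of_lt hp.one_lt) (hcount.symm.trans hdiff)

theorem conjAct_smul_eq_of_le_centralizer {R : Subgroup X} {g : ConjAct X}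
    (hg : ConjAct.ofConjAct g ∈ Subgroup.centralizer (R : Set X)) : g • R = R := by
  have hfix (r : X) (hr : r ∈ R) : g • r = r := by
    rw [ConjAct.smul_def, ← Subgroup.mem_centralizer_iff.mp hg r hr, mul_inv_cancel_right]
  ext r
  rw [Subgroup.mem_smul_pointwise_iff_exists]
  constructor
  · rintro ⟨s, hs, rfl⟩
    rwa [hfix s hs]
  · exact fun hr => ⟨r, hr, hfix r hr⟩

theorem normal_of_forall_conjAct_smul_eq {R : Subgroup X} (hR : ∀ g : ConjAct X, g • R = R) :
    R.Normal := by
  refine ⟨fun r hr g => ?_⟩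
  rw [← ConjAct.toConjAct_smul, ← hR (ConjAct.toConjAct g)]
  exact Subgroup.smul_mem_pointwise_smul _ _ _ hr

/- The complements of `P` in the abelian group `T` number `p`, and `X` permutes them through the
`q`-group `X ⧸ T`, so one of them is normal. -/
theorem exists_normal_complement_of_index_eq_pow [Finite X] {p q m : ℕ} (hp : p.Prime)
    (hq : q.Prime) (hpq : q ≠ p) {P T : Subgroup X} [P.Normal] [T.Normal] (hPT : P ≤ T)
    (hP : Nat.card P = p) (hT : Nat.card T = p ^ 2) (hpow : ∀ g ∈ T, g ∉ P → g ^ p = 1)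
    (hidx : T.index = q ^ m) :
    ∃ R : Subgroup X, R.Normal ∧ R ≤ T ∧ R ⊓ P = ⊥ ∧ Nat.card R = p := by
  have : Fact p.Prime := ⟨hp⟩
  have : IsMulCommutative T := IsPGroup.isMulCommutative_of_card_eq_prime_sq hT
  have htrivial : ∀ t ∈ T.comap (ConjAct.ofConjAct : ConjAct X ≃* X).toMonoidHom,
      ∀ R : primeSubgroupsNe p P T, t • R = R := fun t ht R =>
    Subtype.ext <| conjAct_smul_eq_of_le_centralizer <|
      Subgroup.centralizer_le R.2.1 (T.le_centralizer ht)
  obtain ⟨R, hR⟩ := fixedPoints_nonempty_of_index_eq_pow hq htrivial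
    ((Subgroup.index_comap_of_surjective T ConjAct.ofConjAct.surjective).trans hidx) (by
      have hcard : Nat.card (primeSubgroupsNe p P T) = p :=
        ncard_primeSubgroupsNe hp hPT hP hT hpow
      rwa [hcard, Nat.prime_dvd_prime_iff_eq hq hp])
  refine ⟨R, normal_of_forall_conjAct_smul_eq fun g => congrArg Subtype.val (hR g), R.2.1, ?_,
    R.2.2.1⟩
  rw [Subgroup.eq_bot_iff_forall]
  rintro g ⟨hgR, hgP⟩
  by_contra hg1
  exact R.2.2.2 ((zpowers_eq_of_mem_of_card_prime hp R.2.2.1 hgR hg1).symm.trans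
    (zpowers_eq_of_mem_of_card_prime hp hP hgP hg1))

theorem relIndex_eq_of_prime_of_not_dvd_index {p : ℕ} (hp : p.Prime) {K A T : Subgroup X}
    [K.Normal] (hKA : K ≤ A) (hTA : T ≤ A) (hidx : K.relIndex A = p) (hT : ¬ p ∣ T.index) :
    K.relIndex T = p := by
  have hdvd : K.relIndex T ∣ p := by
    rw [← hidx, ← Subgroup.relIndex_sup_left T K]
    exact Dvd.intro _ (Subgroup.relIndex_mul_relIndex K (K ⊔ T) A le_sup_left (sup_le hKA hTA))
  refine ((Nat.dvd_prime hp).mp hdvd).resolve_left fun h => hT ?_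
  rw [← hidx]
  exact (Subgroup.relIndex_dvd_index_of_le hKA).trans
    (Subgroup.index_dvd_of_le (Subgroup.relIndex_eq_one.mp h))

theorem exists_normal_complement_of_card_three [Finite X] {P K A : Subgroup X} [P.Normal]
    [K.Normal] [A.Normal] (hPK : P ≤ K) (hKA : K ≤ A) (hP : Nat.card P = 3)
    (hCK : K ⊓ Subgroup.centralizer (P : Set X) ≤ P) (hA : A.index ∣ 2) (hKA3 : K.relIndex A = 3)
    (hcube : ∀ a ∈ A, a ∉ K → a ^ 3 ∈ P → a ^ 3 = 1) :
    ∃ R : Subgroup X, R.Normal ∧ R ≤ A ∧ R ⊓ K = ⊥ ∧ Nat.card R = 3 := by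
  have : Fact (Nat.Prime 3) := ⟨Nat.prime_three⟩
  have : IsCyclic P := isCyclic_of_prime_card hP
  have hC : (Subgroup.centralizer (P : Set X)).index ∣ 2 := by
    have hdvd := index_centralizer_dvd_card_mulAut P
    rwa [IsCyclic.card_mulAut, hP, Nat.totient_prime Nat.prime_three] at hdvd
  set T := Subgroup.centralizer (P : Set X) ⊓ A
  have hPT : P ≤ T := le_inf P.le_centralizer (hPK.trans hKA)
  have hKT : K ⊓ T = P :=
    le_antisymm (fun x hx => hCK ⟨hx.1, hx.2.1⟩) (le_inf hPK hPT)
  have hTidx : T.index ∣ 2 ^ 2 := by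
    rw [← Subgroup.relIndex_mul_index (inf_le_right : T ≤ A), Subgroup.inf_relIndex_right, sq]
    exact mul_dvd_mul ((Subgroup.relIndex_dvd_index_of_normal _ A).trans hC) hA
  obtain ⟨m, -, hm⟩ := (Nat.dvd_prime_pow Nat.prime_two).mp hTidx
  have hPT3 : P.relIndex T = 3 := by
    rw [← hKT, Subgroup.inf_relIndex_right]
    exact relIndex_eq_of_prime_of_not_dvd_index Nat.prime_three hKA inf_le_right hKA3
      fun h => absurd (h.trans hTidx) (by norm_num)
  have hTcard : Nat.card T = 3 ^ 2 := by
    rw [← Subgroup.relIndex_bot_left, ← Subgroup.relIndex_mul_relIndex ⊥ P T bot_le hPT,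
      Subgroup.relIndex_bot_left, hP, hPT3, sq]
  have hpow (g : X) (hg : g ∈ T) (hgP : g ∉ P) : g ^ 3 = 1 :=
    hcube g hg.2 (fun hgK => hgP (hKT ▸ ⟨hgK, hg⟩)) (hPT3 ▸ P.pow_relIndex_mem hg)
  obtain ⟨R, hRn, hRT, hRP, hR⟩ := exists_normal_complement_of_index_eq_pow Nat.prime_three
    Nat.prime_two (by norm_num) hPT hP hTcard hpow hm
  refine ⟨R, hRn, hRT.trans inf_le_right, eq_bot_iff.mpr ?_, hR⟩
  rw [← hRP, ← hKT]
  exact fun x hx => ⟨hx.1, hx.2, hRT hx.1⟩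

end NormalComplement

section Derangements

variable {H X Ω : Type*} [Group H] [MulAction H X] [MulAction H Ω]

theorem sum_ncard_fixedBy [Fintype H] [Finite X] :
    ∑ h : H, (fixedBy X h).ncard = Nat.card (orbitRel.Quotient H X) * Nat.card H := by
  classical
  have := Fintype.ofFinite X
  have := Fintype.ofFinite (orbitRel.Quotient H X)
  rw [Nat.card_eq_fintype_card, Nat.card_eq_fintype_card,
    ← sum_card_fixedBy_eq_card_orbits_mul_card_group]
  exact Finset.sum_congr rfl fun h _ => by rw [← Nat.card_coe_set_eq, Nat.card_eq_fintype_card]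

variable (H X) in
/-- The elements of `H` acting on `X` without fixed points. -/
def derangementSet : Set H :=
  {h | ∀ x : X, h • x ≠ x}

theorem one_notMem_derangementSet [Nonempty X] : (1 : H) ∉ derangementSet H X :=
  fun h => h (Classical.arbitrary X) (one_smul H _)

theorem exists_smul_eq_of_notMem_derangementSet {h : H} (hd : h ∉ derangementSet H X) :
    ∃ x : X, h • x = x := by
  simpa [derangementSet] using hd

theorem conj_mem_derangementSet {h : H} (hd : h ∈ derangementSet H X) (g : H) :
    g * h * g⁻¹ ∈ derangementSet H X := by
  intro x hx
  refine hd (g⁻¹ • x) ?_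
  rwa [eq_inv_smul_iff, ← mul_smul, ← mul_smul]

theorem ncard_derangementSet_add_one_add [Finite H] [Nonempty X] :
    (derangementSet H X).ncard + 1 + (insert 1 (derangementSet H X) : Set H)ᶜ.ncard =
      Nat.card H := by
  rw [← Set.ncard_add_ncard_compl (insert 1 (derangementSet H X)),
    Set.ncard_insert_of_notMem one_notMem_derangementSet]

theorem card_add_ncard_eq_of_subsingleton_fixedBy [Finite H] [Finite X]
    (hfix : ∀ h : H, h ≠ 1 → (fixedBy X h).Subsingleton) :
    Nat.card X + (insert 1 (derangementSet H X) : Set H)ᶜ.ncard =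
      Nat.card (orbitRel.Quotient H X) * Nat.card H := by
  classical
  have := Fintype.ofFinite H
  have hterm (h : H) (h1 : h ≠ 1) :
      (fixedBy X h).ncard = if h ∈ derangementSet H X then 0 else 1 := by
    split_ifs with hd
    · have hempty : fixedBy X h = ∅ := Set.eq_empty_of_forall_notMem hd
      rw [hempty, Set.ncard_empty]
    · obtain ⟨x, hx⟩ := exists_smul_eq_of_notMem_derangementSet hd
      exact Set.ncard_eq_one.mpr ⟨x, (hfix h h1).eq_singleton_of_mem hx⟩
  rw [← sum_ncard_fixedBy, Fintype.sum_eq_add_sum_compl 1,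
    Finset.sum_congr rfl fun h hh => hterm h (by simpa using hh), Finset.sum_ite,
    Finset.sum_const_zero, zero_add, Finset.sum_const, smul_eq_mul, mul_one,
    Set.ncard_eq_toFinset_card', fixedBy_one_eq_univ, Set.ncard_univ]
  congr 2
  ext h
  simp

variable (H X) in
/-- The points of `X` with nontrivial stabilizer in `H`. -/
def nonfreePoints : SubMulAction H X where
  carrier := {x | ∃ h : H, h ≠ 1 ∧ h • x = x}
  smul_mem' g x := by
    rintro ⟨h, h1, hx⟩
    exact ⟨g * h * g⁻¹, by simpa using h1, by simp [mul_smul, hx]⟩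

theorem insert_one_derangementSet_nonfreePoints :
    (insert 1 (derangementSet H (nonfreePoints H X)) : Set H) = insert 1 (derangementSet H X) := by
  ext h
  refine or_congr_right' fun h1 => ⟨fun hd x hx => ?_, fun hd x hx => hd x ?_⟩
  · exact hd ⟨x, h, h1, hx⟩ (Subtype.ext hx)
  · exact congrArg Subtype.val hx

theorem card_nonfreePoints_le [Finite H] (hfix : ∀ h : H, h ≠ 1 → (fixedBy X h).Subsingleton) :
    Nat.card (nonfreePoints H X) ≤ (insert 1 (derangementSet H X) : Set H)ᶜ.ncard := by
  choose f hf1 hf using fun x : nonfreePoints H X => x.2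
  refine Nat.card_le_card_of_injective
    (fun x => (⟨f x, fun h => h.elim (hf1 x) fun hd => hd x (hf x)⟩ :
      ((insert 1 (derangementSet H X))ᶜ : Set H))) fun x y hxy => ?_
  have hxy : f x = f y := congrArg Subtype.val hxy
  exact Subtype.ext (hfix (f x) (hf1 x) (hf x) (hxy ▸ hf y))

/- By the orbit-counting lemma, the points with nontrivial stabilizer, of which there are at most
`|H| - 1`, form a single orbit of size `d + 1`, unless there are none and `d + 1 = |H|`. -/
theorem ncard_derangementSet_add_one_dvd_card [Finite H] [Finite X] [Nonempty X]
    (hfix : ∀ h : H, h ≠ 1 → (fixedBy X h).Subsingleton) :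
    (derangementSet H X).ncard + 1 ∣ Nat.card H := by
  have hsplit := ncard_derangementSet_add_one_add (H := H) (X := X)
  have hle := card_nonfreePoints_le hfix
  have hburnside := card_add_ncard_eq_of_subsingleton_fixedBy (X := nonfreePoints H X)
    fun h h1 x hx y hy => Subtype.ext
      (hfix h h1 (congrArg Subtype.val hx) (congrArg Subtype.val hy))
  rw [insert_one_derangementSet_nonfreePoints] at hburnside
  have horbits : Nat.card (orbitRel.Quotient H (nonfreePoints H X)) ≤ 1 := by
    by_contra! h2
    have := Nat.mul_le_mul_right (Nat.card H) h2
    omega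
  interval_cases hcard : Nat.card (orbitRel.Quotient H (nonfreePoints H X))
  · exact dvd_of_eq (by omega)
  · obtain ⟨hsub, -⟩ := Nat.card_eq_one_iff_unique.mp hcard
    have := (pretransitive_iff_subsingleton_quotient H (nonfreePoints H X)).mpr hsub
    have hB : (derangementSet H X).ncard + 1 = Nat.card (nonfreePoints H X) := by omega
    have : Nonempty (nonfreePoints H X) := (Nat.card_pos_iff.mp (hB ▸ Nat.succ_pos _)).1
    rw [hB, ← index_stabilizer_of_transitive H (Classical.arbitrary (nonfreePoints H X))]
    exact Subgroup.index_dvd_card _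

theorem ncard_derangementSet_add_one_dvd [Finite H] [Finite X] [Finite Ω] [Nonempty X] {c : ℕ}
    (hX : ∀ h : H, h ≠ 1 → (fixedBy X h).Subsingleton)
    (hΩ : ∀ h : H, h ≠ 1 → (fixedBy Ω h).ncard = c) (hcard : Nat.card Ω = c * Nat.card X) :
    (derangementSet H X).ncard + 1 ∣ c := by
  classical
  have := Fintype.ofFinite H
  have hsumΩ := sum_ncard_fixedBy (H := H) (X := Ω)
  rw [Fintype.sum_eq_add_sum_compl 1, Finset.sum_congr rfl fun h hh => hΩ h (by simpa using hh),
    fixedBy_one_eq_univ, Set.ncard_univ, Finset.sum_const, Finset.card_compl,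
    ← Nat.card_eq_fintype_card, Finset.card_singleton, smul_eq_mul, hcard] at hsumΩ
  have hsumX := card_add_ncard_eq_of_subsingleton_fixedBy hX
  have hsplit := ncard_derangementSet_add_one_add (H := H) (X := X)
  have hdvd := ncard_derangementSet_add_one_dvd_card hX
  set d := (derangementSet H X).ncard
  have hcd : (c * d : ℤ) = Nat.card H *
      (Nat.card (orbitRel.Quotient H Ω) - c * Nat.card (orbitRel.Quotient H X)) := by
    have : Nat.card H - 1 = d + (insert 1 (derangementSet H X) : Set H)ᶜ.ncard := by omega
    rw [this] at hsumΩ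
    zify at hsumΩ hsumX
    linear_combination hsumΩ - c * hsumX
  have hHcd : Nat.card H ∣ c * d := by exact_mod_cast Dvd.intro _ hcd.symm
  exact (Nat.coprime_self_add_left.mpr (Nat.coprime_one_left d)
    ).dvd_of_dvd_mul_right (hdvd.trans hHcd)

theorem coe_centralizer_eq_insert_one_derangementSet [Finite H] [Finite X] [Nonempty X]
    (hfix : ∀ h : H, h ≠ 1 → (fixedBy X h).Subsingleton)
    (hp : ((derangementSet H X).ncard + 1).Prime) {x : H} (hx : x ∈ derangementSet H X) :
    (Subgroup.centralizer {x} : Set H) = insert 1 (derangementSet H X) := by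
  have hsub : (Subgroup.centralizer {x} : Set H) ⊆ insert 1 (derangementSet H X) := by
    intro y hy
    refine or_iff_not_imp_left.mpr fun h1 a ha => hx a (hfix y h1 ?_ ha)
    rw [mem_fixedBy, smul_smul, Subgroup.mem_centralizer_singleton_iff.mp hy, mul_smul, ha]
  refine Set.eq_of_subset_of_ncard_le hsub ?_
  rw [Set.ncard_insert_of_notMem one_notMem_derangementSet]
  have hindex : (Subgroup.centralizer {x}).index ≤ (derangementSet H X).ncard := by
    calc (Subgroup.centralizer {x}).index = (stabilizer (ConjAct H) x).index := by
          rw [Subgroup.centralizer_eq_comap_stabilizer]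
          rfl
      _ = (orbit (ConjAct H) x).ncard := index_stabilizer _ x
      _ ≤ (derangementSet H X).ncard := by
          refine Set.ncard_le_ncard ?_
          rintro _ ⟨g, rfl⟩
          exact conj_mem_derangementSet hx _
  have hdvd := ncard_derangementSet_add_one_dvd_card hfix
  rw [← (Subgroup.centralizer {x}).card_mul_index, hp.dvd_mul] at hdvd
  exact Nat.le_of_dvd Nat.card_pos (hdvd.resolve_right fun h =>
    (Nat.le_of_dvd (Nat.pos_of_ne_zero Subgroup.index_ne_zero_of_finite) h).not_gt
      (Nat.lt_succ_of_le hindex))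

theorem exists_subgroup_coe_eq_insert_one_derangementSet [Finite H] [Finite X] [Finite Ω] {c : ℕ}
    (hc : c.Prime) (hX : ∀ h : H, h ≠ 1 → (fixedBy X h).Subsingleton)
    (hΩ : ∀ h : H, h ≠ 1 → (fixedBy Ω h).ncard = c) (hcard : Nat.card Ω = c * Nat.card X)
    [Nonempty X] (hD : (derangementSet H X).Nonempty) :
    ∃ P : Subgroup H, (P : Set H) = insert 1 (derangementSet H X) ∧ Nat.card P = c ∧
      Subgroup.centralizer (P : Set H) ≤ P := by
  obtain ⟨x, hx⟩ := hD
  have hpos : (derangementSet H X).ncard ≠ 0 := Set.ncard_ne_zero_of_mem hx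
  have hdc : (derangementSet H X).ncard + 1 = c :=
    ((Nat.dvd_prime hc).mp (ncard_derangementSet_add_one_dvd hX hΩ hcard)).resolve_left (by omega)
  have hP := coe_centralizer_eq_insert_one_derangementSet hX (hdc ▸ hc) hx
  refine ⟨Subgroup.centralizer {x}, hP, ?_, Subgroup.centralizer_le ?_⟩
  · rw [← hdc, ← Set.ncard_insert_of_notMem one_notMem_derangementSet, ← hP]
    rfl
  · exact Set.singleton_subset_iff.mpr (hP ▸ Set.mem_insert_of_mem 1 hx)

end Derangements

section ThreeBlocks

variable {G B : Type*} [Group G] [MulAction G B]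

theorem perm_eq_one_of_mem_alternatingGroup [Fintype B] [DecidableEq B] (hB : Nat.card B = 3)
    {σ : Equiv.Perm B} (hσ : σ ∈ alternatingGroup B) {b : B} (hb : σ b = b) : σ = 1 := by
  have key : ∀ τ : Equiv.Perm (Fin 3), Equiv.Perm.sign τ = 1 → (∃ i, τ i = i) → τ = 1 := by decide
  let e : B ≃ Fin 3 := Fintype.equivFinOfCardEq (by rwa [← Nat.card_eq_fintype_card])
  refine (map_eq_one_iff e.permCongrHom e.permCongrHom.injective).mp
    (key (e.permCongr σ) ?_ ⟨e b, ?_⟩)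
  · rwa [Equiv.Perm.sign_permCongr]
  · rw [Equiv.permCongr_apply, e.symm_apply_apply, hb]

theorem exists_normal_relIndex_ker_eq_three [IsPretransitive G B] (hB : Nat.card B = 3) :
    ∃ A : Subgroup G, A.Normal ∧ (toPermHom G B).ker ≤ A ∧ A.index ∣ 2 ∧
      (toPermHom G B).ker.relIndex A = 3 ∧
      ∀ a ∈ A, ∀ b : B, a • b = b → a ∈ (toPermHom G B).ker := by
  classical
  have : Finite B := Nat.finite_of_card_ne_zero (by omega)
  have := Fintype.ofFinite B
  have : Nontrivial B := Finite.one_lt_card_iff_nontrivial.mp (by omega)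
  set f := toPermHom G B
  set A := (alternatingGroup B).comap f
  have hkerA : f.ker ≤ A := Subgroup.ker_le_comap f _
  have hA : A.index ∣ 2 := by
    rw [← alternatingGroup.index_eq_two (α := B), Subgroup.index_comap]
    exact Subgroup.relIndex_dvd_index_of_normal _ _
  have hdvd : f.ker.relIndex A ∣ 3 := by
    have hcard : Nat.card (alternatingGroup B) = 3 := by
      rw [nat_card_alternatingGroup, hB]
      rfl
    rw [Subgroup.relIndex_ker, ← hcard]
    exact Subgroup.card_dvd_of_le (Subgroup.map_comap_le f _)
  have h3 : 3 ∣ f.ker.relIndex A * A.index := by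
    rw [Subgroup.relIndex_mul_index hkerA, ← hB,
      ← index_stabilizer_of_transitive G (Classical.arbitrary B)]
    exact Subgroup.index_dvd_of_le fun g hg => Equiv.congr_fun hg _
  refine ⟨A, inferInstance, hkerA, hA, ?_, fun a ha b hb =>
    perm_eq_one_of_mem_alternatingGroup hB ha hb⟩
  refine ((Nat.dvd_prime Nat.prime_three).mp hdvd).resolve_left fun h1 => ?_
  rw [h1, one_mul] at h3
  exact absurd (h3.trans hA) (by norm_num)

end ThreeBlocks

section OrbitKernel

variable {G Ω : Type*} [Group G] [MulAction G Ω] {N : Subgroup G} [N.Normal]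

variable (Ω N) in
/-- The set of `N`-orbits on `Ω`, with its action of `G`. -/
def orbitBlocks : SubMulAction G (Set Ω) where
  carrier := {s | IsOrbitOf G Ω N s}
  smul_mem' g s := by
    rintro ⟨ω, rfl⟩
    exact ⟨g • ω, smul_orbit_eq_orbit_smul N ω g⟩

variable (N) in
/-- The `N`-orbit of `ω`, as a point of `orbitBlocks Ω N`. -/
def orbitBlock (ω : Ω) : orbitBlocks Ω N :=
  ⟨orbit N ω, ω, rfl⟩

theorem orbitBlock_eq_iff {ω ω' : Ω} : orbitBlock N ω = orbitBlock N ω' ↔ ω ∈ orbit N ω' :=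
  Subtype.ext_iff.trans orbit_eq_iff

theorem smul_orbitBlock (g : G) (ω : Ω) : g • orbitBlock N ω = orbitBlock N (g • ω) :=
  Subtype.ext (smul_orbit_eq_orbit_smul N ω g)

theorem smul_orbitBlock_eq_iff {g : G} {ω : Ω} :
    g • orbitBlock N ω = orbitBlock N ω ↔ g • ω ∈ orbit N ω := by
  rw [smul_orbitBlock, orbitBlock_eq_iff]

theorem orbitBlock_surjective : Function.Surjective (orbitBlock N : Ω → orbitBlocks Ω N) := by
  rintro ⟨_, ω, rfl⟩
  exact ⟨ω, rfl⟩

instance [IsPretransitive G Ω] : IsPretransitive G (orbitBlocks Ω N) :=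
  IsPretransitive.of_surjective_map (f := ⟨orbitBlock N, fun g ω => (smul_orbitBlock g ω).symm⟩)
    orbitBlock_surjective inferInstance

variable (Ω N) in
/-- The kernel of the action of `G` on the set of `N`-orbits. -/
def orbitKernel : Subgroup G :=
  (toPermHom G (orbitBlocks Ω N)).ker

instance : (orbitKernel Ω N).Normal :=
  MonoidHom.normal_ker _

theorem mem_orbitKernel {g : G} : g ∈ orbitKernel Ω N ↔ ∀ ω : Ω, g • ω ∈ orbit N ω := by
  simp only [← smul_orbitBlock_eq_iff]
  exact Equiv.ext_iff.trans orbitBlock_surjective.forall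

theorem le_orbitKernel : N ≤ orbitKernel Ω N :=
  fun m hm => mem_orbitKernel.mpr fun _ => ⟨⟨m, hm⟩, rfl⟩

theorem mem_orbitKernel_of_mk_eq {g k : G} (hk : k ∈ orbitKernel Ω N) (hgk : (g : G ⧸ N) = k) :
    g ∈ orbitKernel Ω N :=
  div_mul_cancel g k ▸ mul_mem (le_orbitKernel (QuotientGroup.eq_iff_div_mem.mp hgk)) hk

theorem exists_mul_smul_eq_self {k : G} (hk : k ∈ orbitKernel Ω N) (ω : Ω) :
    ∃ m : N, ((m : G) * k) • ω = ω := by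
  obtain ⟨m, hm⟩ := mem_orbitKernel.mp hk ω
  refine ⟨m⁻¹, ?_⟩
  rw [mul_smul, InvMemClass.coe_inv, inv_smul_eq_iff]
  exact hm.symm

theorem orbit_orbitKernel (ω : Ω) : orbit (orbitKernel Ω N) ω = orbit N ω := by
  ext ω'
  constructor
  · rintro ⟨k, rfl⟩
    exact mem_orbitKernel.mp k.2 ω
  · rintro ⟨m, rfl⟩
    exact ⟨⟨m, le_orbitKernel m.2⟩, rfl⟩

end OrbitKernel

section FixesInOneOrbit

variable {G Ω : Type*} [Group G] [MulAction G Ω] {N : Subgroup G}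

variable (Ω N) in
/-- All fixed points of `k` on `Ω` lie in a single orbit of `N`. -/
def FixesInOneOrbit (k : G) : Prop :=
  ∀ ω ω' : Ω, k • ω = ω → k • ω' = ω' → ω' ∈ orbit N ω

namespace FixesInOneOrbit

theorem conj [N.Normal] {k : G} (hk : FixesInOneOrbit Ω N k) (g : G) :
    FixesInOneOrbit Ω N (g * k * g⁻¹) := by
  have hfixed {ω : Ω} (hω : (g * k * g⁻¹) • ω = ω) : k • g⁻¹ • ω = g⁻¹ • ω := by
    rwa [eq_inv_smul_iff, ← mul_smul, ← mul_smul]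
  intro ω ω' hω hω'
  rw [← Set.smul_mem_smul_set_iff (a := g⁻¹), smul_orbit_eq_orbit_smul]
  exact hk _ _ (hfixed hω) (hfixed hω')

theorem smul_mem_orbit_of_pow {g : G} {n : ℕ} (hg : FixesInOneOrbit Ω N (g ^ n)) {ω : Ω}
    (hω : g ^ n • ω = ω) : g • ω ∈ orbit N ω := by
  refine hg ω (g • ω) hω ?_
  rw [← mul_smul, (Commute.pow_self g n).eq, mul_smul, hω]

end FixesInOneOrbit

end FixesInOneOrbit

section Semiregular

variable {G Ω : Type*} [Group G] [MulAction G Ω] {N : Subgroup G}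

namespace IsSemiregular

theorem eq_of_smul_eq (hN : IsSemiregular G Ω N) {a b : G} (hab : (a : G ⧸ N) = b) {ω : Ω}
    (h : a • ω = b • ω) : a = b := by
  by_contra hne
  refine hN _ (QuotientGroup.eq.mp hab) (mt inv_mul_eq_one.mp hne) ω ?_
  rw [mul_smul, ← h, inv_smul_smul]

theorem injective_smul (hN : IsSemiregular G Ω N) (ω : Ω) :
    Function.Injective fun m : N => m • ω :=
  fun a b hab => Subtype.ext <|
    hN.eq_of_smul_eq (QuotientGroup.eq.mpr (mul_mem (inv_mem a.2) b.2)) hab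

theorem ncard_orbit (hN : IsSemiregular G Ω N) (ω : Ω) : (orbit N ω).ncard = Nat.card N :=
  Nat.card_range_of_injective (hN.injective_smul ω)

variable [N.Normal]

theorem card_eq_card_orbitBlocks_mul [Finite Ω] (hN : IsSemiregular G Ω N) :
    Nat.card Ω = Nat.card (orbitBlocks Ω N) * Nat.card N := by
  rw [← Set.ncard_univ, ← Set.ncard_univ]
  refine ncard_eq_ncard_mul_of_fibers (f := orbitBlock N) (Set.mapsTo_univ _ _) fun b _ => ?_
  obtain ⟨ω, rfl⟩ := orbitBlock_surjective b
  simp only [Set.mem_univ, true_and, orbitBlock_eq_iff]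
  exact hN.ncard_orbit ω

theorem sum_ncard_fixedBy_mul [Fintype N] [Finite Ω] (hN : IsSemiregular G Ω N) {k : G}
    (hk : k ∈ orbitKernel Ω N) : ∑ m : N, (fixedBy Ω ((m : G) * k)).ncard = Nat.card Ω := by
  choose f hf using exists_mul_smul_eq_self hk
  rw [← Nat.card_congr (Equiv.sigmaFiberEquiv f), Nat.card_sigma]
  refine Finset.sum_congr rfl fun m _ => Nat.card_congr (Equiv.subtypeEquivRight fun ω => ?_)
  refine ⟨fun hω => hN.injective_smul (k • ω) ?_, fun hm => hm ▸ hf ω⟩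
  have := hf ω
  rw [mul_smul] at this
  rw [mem_fixedBy, mul_smul] at hω
  exact this.trans hω.symm

theorem ncard_fixedBy_eq_card_orbitBlocks [Finite G] [Finite Ω] (hN : IsSemiregular G Ω N)
    (hfix : ∀ g : G, g ≠ 1 → (fixedBy Ω g).ncard ≤ Nat.card (orbitBlocks Ω N)) {k : G}
    (hk : k ∈ orbitKernel Ω N) (hkN : k ∉ N) :
    (fixedBy Ω k).ncard = Nat.card (orbitBlocks Ω N) := by
  have := Fintype.ofFinite N
  have hle (m : N) (_ : m ∈ Finset.univ) :
      (fixedBy Ω ((m : G) * k)).ncard ≤ Nat.card (orbitBlocks Ω N) :=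
    hfix _ fun h => hkN (eq_inv_of_mul_eq_one_right h ▸ N.inv_mem m.2)
  have hsum := hN.sum_ncard_fixedBy_mul hk
  rw [hN.card_eq_card_orbitBlocks_mul, Nat.card_eq_fintype_card (α := N), mul_comm,
    ← Finset.card_univ, ← smul_eq_mul, ← Finset.sum_const] at hsum
  simpa using (Finset.sum_eq_sum_iff_of_le hle).mp hsum 1 (Finset.mem_univ 1)

theorem ncard_fixedBy_inter_orbit (hN : IsSemiregular G Ω N) {k : G} {ω : Ω} (hω : k • ω = ω) :
    (fixedBy Ω k ∩ orbit N ω).ncard = {m : N | Commute k m}.ncard := by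
  have hfixed (m : N) : m • ω ∈ fixedBy Ω k ↔ Commute k m := by
    have hkm : k • m • ω = m • ω ↔ (k * m) • ω = ((m : G) * k) • ω := by
      rw [mul_smul, mul_smul, hω]
      rfl
    have hcoset : ((k * m : G) : G ⧸ N) = ((m * k : G) : G ⧸ N) := by
      simp only [QuotientGroup.mk_mul, (QuotientGroup.eq_one_iff _).mpr m.2, mul_one, one_mul]
    exact hkm.trans ⟨hN.eq_of_smul_eq hcoset, fun h => congrArg (· • ω) h⟩
  have himage : fixedBy Ω k ∩ orbit N ω = (fun m : N => m • ω) '' {m : N | Commute k m} := by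
    rw [orbit, ← Set.image_preimage_eq_inter_range]
    exact congrArg _ (Set.ext hfixed)
  rw [himage, Set.ncard_image_of_injective _ (hN.injective_smul ω)]

theorem fixesInOneOrbit_or_existsUnique [Finite Ω] (hN : IsSemiregular G Ω N) {k : G}
    (hc : (Nat.card (orbitBlocks Ω N)).Prime)
    (hk : (fixedBy Ω k).ncard = Nat.card (orbitBlocks Ω N)) :
    FixesInOneOrbit Ω N k ∨ ∀ ω : Ω, ∃! x, x ∈ fixedBy Ω k ∩ orbit N ω := by
  have hfibers : (fixedBy Ω k).ncard =
      (orbitBlock N '' fixedBy Ω k).ncard * {m : N | Commute k m}.ncard := by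
    refine ncard_eq_ncard_mul_of_fibers (Set.mapsTo_image _ _) ?_
    rintro _ ⟨ω, hω, rfl⟩
    simp only [orbitBlock_eq_iff]
    exact hN.ncard_fixedBy_inter_orbit hω
  rcases Nat.prime_mul_iff.mp (hfibers ▸ hk ▸ hc) with ⟨-, hcomm⟩ | ⟨-, himage⟩
  · right
    rw [hcomm, mul_one, hk] at hfibers
    have himage : orbitBlock N '' fixedBy Ω k = Set.univ :=
      (Set.eq_univ_iff_ncard _).mpr hfibers.symm
    intro ω
    obtain ⟨x, hx, hxω⟩ := himage.ge (Set.mem_univ (orbitBlock N ω))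
    rw [← Set.singleton_iff_unique_mem, ← Set.ncard_eq_one, ← hcomm,
      ← hN.ncard_fixedBy_inter_orbit hx, orbit_eq_iff.mpr (orbitBlock_eq_iff.mp hxω)]
  · left
    obtain ⟨b, hb⟩ := Set.ncard_eq_one.mp himage
    have hmem {ω : Ω} (hω : k • ω = ω) : orbitBlock N ω = b :=
      hb.subset (Set.mem_image_of_mem _ hω)
    exact fun ω ω' hω hω' => orbitBlock_eq_iff.mp ((hmem hω').trans (hmem hω).symm)

theorem fixesInOneOrbit_of_mk_eq [Finite G] [Finite Ω] (hN : IsSemiregular G Ω N)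
    (hc : (Nat.card (orbitBlocks Ω N)).Prime)
    (hfix : ∀ g : G, g ≠ 1 → (fixedBy Ω g).ncard ≤ Nat.card (orbitBlocks Ω N)) {g k : G}
    (hk : k ∈ orbitKernel Ω N) (hkN : k ∉ N) (hk1 : FixesInOneOrbit Ω N k)
    (hgk : (g : G ⧸ N) = k) : FixesInOneOrbit Ω N g := by
  have hg : g ∈ orbitKernel Ω N := mem_orbitKernel_of_mk_eq hk hgk
  have hgN : g ∉ N := by rwa [← QuotientGroup.eq_one_iff, hgk, QuotientGroup.eq_one_iff]
  refine (hN.fixesInOneOrbit_or_existsUnique hc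
    (hN.ncard_fixedBy_eq_card_orbitBlocks hfix hg hgN)).elim id fun hunique => ?_
  obtain ⟨ω, hω⟩ : (fixedBy Ω k).Nonempty := by
    rw [← Set.ncard_pos, hN.ncard_fixedBy_eq_card_orbitBlocks hfix hk hkN]
    exact hc.pos
  obtain ⟨_, ⟨hfixed, n, rfl⟩, -⟩ := hunique ω
  have hconj : g * n = n * k := by
    refine hN.eq_of_smul_eq (ω := ω) ?_ ?_
    · simp only [QuotientGroup.mk_mul, hgk, (QuotientGroup.eq_one_iff _).mpr n.2, mul_one, one_mul]
    · rw [mul_smul, mul_smul, hω]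
      exact hfixed
  exact eq_mul_inv_of_mul_eq hconj ▸ hk1.conj n

end IsSemiregular

end Semiregular

section StabilizerInOrbitKernel

variable {G Ω : Type*} [Group G] [MulAction G Ω] {N : Subgroup G} [N.Normal] {ω β : Ω}
  {h : stabilizer (orbitKernel Ω N) ω}

variable (N) in
/-- The projection to `G ⧸ N` of the stabilizer of `ω` in the kernel of `G` on the `N`-orbits; it is
an isomorphism onto the image of that kernel when `N` is semiregular. -/
def stabilizerToQuotient (ω : Ω) : stabilizer (orbitKernel Ω N) ω →* G ⧸ N :=
  (QuotientGroup.mk' N).comp ((orbitKernel Ω N).subtype.comp (Subgroup.subtype _))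

theorem exists_stabilizerToQuotient_eq {k : G} (hk : k ∈ orbitKernel Ω N) (ω : Ω) :
    ∃ h, stabilizerToQuotient N ω h = k := by
  obtain ⟨m, hm⟩ := exists_mul_smul_eq_self hk ω
  refine ⟨⟨⟨m * k, mul_mem (le_orbitKernel m.2) hk⟩, hm⟩, ?_⟩
  change (m : G ⧸ N) * k = k
  rw [(QuotientGroup.eq_one_iff _).mpr m.2, one_mul]

theorem range_stabilizerToQuotient (ω : Ω) : (stabilizerToQuotient N ω).range =
    (orbitKernel Ω N).map (QuotientGroup.mk' N) := by
  ext x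
  constructor
  · rintro ⟨h, rfl⟩
    exact Subgroup.mem_map_of_mem _ h.1.2
  · rintro ⟨k, hk, rfl⟩
    exact exists_stabilizerToQuotient_eq hk ω

theorem IsSemiregular.injective_stabilizerToQuotient (hN : IsSemiregular G Ω N) (ω : Ω) :
    Function.Injective (stabilizerToQuotient N ω) := fun a b hab =>
  Subtype.ext <| Subtype.ext <| hN.eq_of_smul_eq hab (ω := ω) (Eq.trans a.2 b.2.symm)

theorem IsSemiregular.coe_mem_iff_eq_one (hN : IsSemiregular G Ω N) : (h : G) ∈ N ↔ h = 1 := by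
  rw [← map_eq_one_iff _ (hN.injective_stabilizerToQuotient ω), ← QuotientGroup.eq_one_iff]
  rfl

theorem subsingleton_fixedBy_orbit
    (hh : FixesInOneOrbit Ω N (h : G) ∨ ∀ α : Ω, ∃! x, x ∈ fixedBy Ω (h : G) ∩ orbit N α)
    (hβ : β ∉ orbit N ω) : (fixedBy (orbit (orbitKernel Ω N) β) h).Subsingleton := by
  intro x hx y hy
  have hmem (z : orbit (orbitKernel Ω N) β) : (z : Ω) ∈ orbit N β :=
    orbit_orbitKernel (N := N) β ▸ z.2
  have hx' : (h : G) • (x : Ω) = x := congrArg Subtype.val hx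
  have hy' : (h : G) • (y : Ω) = y := congrArg Subtype.val hy
  rcases hh with hone | hunique
  · refine (hβ ?_).elim
    rw [← orbit_eq_iff, ← orbit_eq_iff.mpr (hmem x)]
    exact orbit_eq_iff.mpr (hone ω x h.2 hx')
  · exact Subtype.ext ((hunique β).unique ⟨hx', hmem x⟩ ⟨hy', hmem y⟩)

theorem mem_derangementSet_orbit_iff
    (hh : FixesInOneOrbit Ω N (h : G) ∨ ∀ α : Ω, ∃! x, x ∈ fixedBy Ω (h : G) ∩ orbit N α)
    (hβ : β ∉ orbit N ω) :
    h ∈ derangementSet (stabilizer (orbitKernel Ω N) ω) (orbit (orbitKernel Ω N) β) ↔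
      FixesInOneOrbit Ω N (h : G) := by
  refine ⟨fun hd => hh.resolve_right fun hunique => ?_, fun hone x hx => hβ ?_⟩
  · obtain ⟨x, hx, hxβ⟩ := (hunique β).exists
    exact hd ⟨x, (orbit_orbitKernel (N := N) β).ge hxβ⟩ (Subtype.ext hx)
  · have hxβ : (x : Ω) ∈ orbit N β := orbit_orbitKernel (N := N) β ▸ x.2
    rw [← orbit_eq_iff, ← orbit_eq_iff.mpr hxβ]
    exact orbit_eq_iff.mpr (hone ω x h.2 (congrArg Subtype.val hx))

theorem exists_subgroup_stabilizer_mem_iff_fixesInOneOrbit [Finite G] [Finite Ω]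
    (hN : IsSemiregular G Ω N) (hc : (Nat.card (orbitBlocks Ω N)).Prime)
    (hfix : ∀ g : G, g ≠ 1 → (fixedBy Ω g).ncard ≤ Nat.card (orbitBlocks Ω N))
    (h1 : h ≠ 1) (hh : FixesInOneOrbit Ω N (h : G)) :
    ∃ P : Subgroup (stabilizer (orbitKernel Ω N) ω), Nat.card P = Nat.card (orbitBlocks Ω N) ∧
      Subgroup.centralizer (P : Set (stabilizer (orbitKernel Ω N) ω)) ≤ P ∧
      ∀ k, k ∈ P ↔ k = 1 ∨ FixesInOneOrbit Ω N (k : G) := by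
  have hncard (k : stabilizer (orbitKernel Ω N) ω) (k1 : k ≠ 1) :
      (fixedBy Ω k).ncard = Nat.card (orbitBlocks Ω N) :=
    hN.ncard_fixedBy_eq_card_orbitBlocks hfix k.1.2 (mt hN.coe_mem_iff_eq_one.mp k1)
  have hdich (k : stabilizer (orbitKernel Ω N) ω) (k1 : k ≠ 1) :=
    hN.fixesInOneOrbit_or_existsUnique hc (hncard k k1)
  have : Nontrivial (orbitBlocks Ω N) := Finite.one_lt_card_iff_nontrivial.mp hc.one_lt
  obtain ⟨b, hb⟩ := exists_ne (orbitBlock N ω)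
  obtain ⟨β, rfl⟩ := orbitBlock_surjective b
  have hβ := mt orbitBlock_eq_iff.mpr hb
  have : Nonempty (orbit (orbitKernel Ω N) β) := (nonempty_orbit β).to_subtype
  have hcard : Nat.card Ω = Nat.card (orbitBlocks Ω N) * Nat.card (orbit (orbitKernel Ω N) β) := by
    rw [hN.card_eq_card_orbitBlocks_mul, ← hN.ncard_orbit β, ← orbit_orbitKernel (N := N) β]
    rfl
  obtain ⟨P, hP, hPcard, hPc⟩ := exists_subgroup_coe_eq_insert_one_derangementSet hc
    (fun k k1 => subsingleton_fixedBy_orbit (hdich k k1) hβ) hncard hcard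
    ⟨h, (mem_derangementSet_orbit_iff (hdich h h1) hβ).mpr hh⟩
  refine ⟨P, hPcard, hPc, fun k => ?_⟩
  rw [← SetLike.mem_coe, hP, Set.mem_insert_iff]
  exact or_congr_right' fun k1 => mem_derangementSet_orbit_iff (hdich k k1) hβ

theorem range_inf_centralizer_map_le {H Q : Type*} [Group H] [Group Q] {f : H →* Q}
    (hf : Function.Injective f) {P : Subgroup H} (hP : Subgroup.centralizer (P : Set H) ≤ P) :
    f.range ⊓ Subgroup.centralizer (P.map f : Set Q) ≤ P.map f := by
  rintro _ ⟨⟨h, rfl⟩, hh⟩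
  refine Subgroup.mem_map_of_mem f (hP (Subgroup.mem_centralizer_iff.mpr fun g hg => hf ?_))
  rw [map_mul, map_mul]
  exact Subgroup.mem_centralizer_iff.mp hh _ (Subgroup.mem_map_of_mem f hg)

theorem exists_subgroup_quotient_mk_mem_iff_fixesInOneOrbit [Finite G] [Finite Ω]
    (hN : IsSemiregular G Ω N) (hc : (Nat.card (orbitBlocks Ω N)).Prime)
    (hfix : ∀ g : G, g ≠ 1 → (fixedBy Ω g).ncard ≤ Nat.card (orbitBlocks Ω N))
    (hone : ∃ k ∈ orbitKernel Ω N, k ∉ N ∧ FixesInOneOrbit Ω N k) :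
    ∃ P : Subgroup (G ⧸ N), Nat.card P = Nat.card (orbitBlocks Ω N) ∧
      (orbitKernel Ω N).map (QuotientGroup.mk' N) ⊓ Subgroup.centralizer (P : Set (G ⧸ N)) ≤ P ∧
      ∀ g : G, (g : G ⧸ N) ∈ P ↔ g ∈ N ∨ g ∈ orbitKernel Ω N ∧ FixesInOneOrbit Ω N g := by
  obtain ⟨k, hk, hkN, hk1⟩ := hone
  obtain ⟨ω, hω⟩ : (fixedBy Ω k).Nonempty := by
    rw [← Set.ncard_pos, hN.ncard_fixedBy_eq_card_orbitBlocks hfix hk hkN]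
    exact hc.pos
  obtain ⟨P, hPcard, hPc, hP⟩ := exists_subgroup_stabilizer_mem_iff_fixesInOneOrbit hN hc hfix
    (h := ⟨⟨k, hk⟩, hω⟩) (mt hN.coe_mem_iff_eq_one.mpr hkN) hk1
  have hinj := hN.injective_stabilizerToQuotient ω
  refine ⟨P.map (stabilizerToQuotient N ω), ?_, ?_, fun g => ?_⟩
  · rw [Subgroup.card_map_of_injective hinj, hPcard]
  · rw [← range_stabilizerToQuotient ω]
    exact range_inf_centralizer_map_le hinj hPc
  by_cases hgN : g ∈ N
  · exact iff_of_true ((QuotientGroup.eq_one_iff g).mpr hgN ▸ one_mem _) (Or.inl hgN)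
  rw [or_iff_right hgN]
  constructor
  · rintro ⟨h, hh, hhg⟩
    have h1 : h ≠ 1 := fun h1 => hgN <| by rw [← QuotientGroup.eq_one_iff, ← hhg, h1, map_one]
    exact ⟨mem_orbitKernel_of_mk_eq h.1.2 hhg.symm,
      hN.fixesInOneOrbit_of_mk_eq hc hfix h.1.2 (mt hN.coe_mem_iff_eq_one.mp h1)
        (((hP h).mp hh).resolve_left h1) hhg.symm⟩
  · rintro ⟨hg, hg1⟩
    obtain ⟨h, hh⟩ := exists_stabilizerToQuotient_eq hg ω
    exact ⟨h, (hP h).mpr (Or.inr (hN.fixesInOneOrbit_of_mk_eq hc hfix hg hgN hg1 hh)), hh⟩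

end StabilizerInOrbitKernel

section RegularOrFrobenius

variable {G Ω : Type*} [Group G] [MulAction G Ω] {N : Subgroup G}

theorem IsSemiregular.isRegularOn [Finite Ω] (hN : IsSemiregular G Ω N)
    (hcard : Nat.card Ω ≤ Nat.card N) : IsRegularOn G Ω N := by
  refine ⟨fun ω ω' => ?_, hN⟩
  have : Finite N := Finite.of_injective _ (hN.injective_smul ω)
  obtain ⟨m, hm⟩ := ((hN.injective_smul ω).bijective_of_nat_card_le hcard).surjective ω'
  exact ⟨m, m.2, hm⟩

variable [N.Normal]

theorem IsSemiregular.isRegularOn_of_relIndex_eq [Finite Ω] (hN : IsSemiregular G Ω N)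
    {R : Subgroup G} (hNR : N ≤ R) (hR : ∀ r ∈ R, ∀ ω : Ω, r • ω ∈ orbit N ω → r ∈ N)
    (hidx : N.relIndex R = Nat.card (orbitBlocks Ω N)) : IsRegularOn G Ω R := by
  have hsemi : IsSemiregular G Ω R := fun r hr r1 ω hω =>
    hN r (hR r hr ω (hω.symm ▸ mem_orbit_self ω)) r1 ω hω
  refine hsemi.isRegularOn (le_of_eq ?_)
  rw [hN.card_eq_card_orbitBlocks_mul, ← hidx, mul_comm, ← Subgroup.relIndex_bot_left N,
    Subgroup.relIndex_mul_relIndex ⊥ N R bot_le hNR, Subgroup.relIndex_bot_left]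

theorem isOrbitOf_orbitKernel_iff {s : Set Ω} :
    IsOrbitOf G Ω (orbitKernel Ω N) s ↔ IsOrbitOf G Ω N s :=
  exists_congr fun ω => by rw [orbit_orbitKernel]

theorem IsSemiregular.isFrobeniusOn_orbitKernel (hN : IsSemiregular G Ω N)
    (hunique : ∀ k ∈ orbitKernel Ω N, k ∉ N → ∀ ω : Ω, ∃! x, x ∈ fixedBy Ω k ∩ orbit N ω)
    (hKN : ¬ orbitKernel Ω N ≤ N) {s : Set Ω} (hs : IsOrbitOf G Ω N s) :
    IsFrobeniusOn G Ω (orbitKernel Ω N) s := by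
  obtain ⟨α, rfl⟩ := hs
  constructor
  · obtain ⟨k, hk, hkN⟩ := SetLike.not_le_iff_exists.mp hKN
    obtain ⟨ω, hfixed, hω⟩ := (hunique k hk hkN α).exists
    exact ⟨k, hk, fun k1 => hkN (k1 ▸ N.one_mem), ω, hω, hfixed⟩
  · intro k hk k1 ω hω ω' hω' hfixed hfixed'
    have hkN : k ∉ N := fun hkN => hN k hkN k1 ω hfixed
    exact (hunique k hk hkN α).unique ⟨hfixed, hω⟩ ⟨hfixed', hω'⟩

theorem exists_normal_relIndex_orbitKernel_eq_three [IsPretransitive G Ω]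
    (hB : Nat.card (orbitBlocks Ω N) = 3) :
    ∃ A : Subgroup G, A.Normal ∧ orbitKernel Ω N ≤ A ∧ A.index ∣ 2 ∧
      (orbitKernel Ω N).relIndex A = 3 ∧
      ∀ a ∈ A, ∀ ω : Ω, a • ω ∈ orbit N ω → a ∈ orbitKernel Ω N := by
  obtain ⟨A, hAn, hKA, hA, hKA3, hfixed⟩ := exists_normal_relIndex_ker_eq_three (G := G) hB
  exact ⟨A, hAn, hKA, hA, hKA3, fun a ha ω hω =>
    hfixed a ha (orbitBlock N ω) (smul_orbitBlock_eq_iff.mpr hω)⟩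

theorem normal_of_mk_mem_iff {P : Subgroup (G ⧸ N)}
    (hP : ∀ g : G, (g : G ⧸ N) ∈ P ↔
      g ∈ N ∨ g ∈ orbitKernel Ω N ∧ FixesInOneOrbit Ω N g) : P.Normal := by
  refine ⟨fun x hx y => ?_⟩
  obtain ⟨k, rfl⟩ := QuotientGroup.mk_surjective x
  obtain ⟨g, rfl⟩ := QuotientGroup.mk_surjective y
  refine (hP (g * k * g⁻¹)).mpr (((hP k).mp hx).imp ?_ ?_)
  · exact fun hk => Subgroup.Normal.conj_mem inferInstance k hk g
  · exact fun hk => ⟨Subgroup.Normal.conj_mem inferInstance k hk.1 g, hk.2.conj g⟩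

theorem IsSemiregular.exists_normal_quotient_inf_eq_bot [Finite G] [Finite Ω]
    (hN : IsSemiregular G Ω N) (hB : Nat.card (orbitBlocks Ω N) = 3)
    (hfix : ∀ g : G, g ≠ 1 → (fixedBy Ω g).ncard ≤ Nat.card (orbitBlocks Ω N))
    (hone : ∃ k ∈ orbitKernel Ω N, k ∉ N ∧ FixesInOneOrbit Ω N k) {A : Subgroup G} [A.Normal]
    (hKA : orbitKernel Ω N ≤ A) (hA : A.index ∣ 2) (hKA3 : (orbitKernel Ω N).relIndex A = 3)
    (hAK : ∀ a ∈ A, ∀ ω : Ω, a • ω ∈ orbit N ω → a ∈ orbitKernel Ω N) :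
    ∃ R : Subgroup (G ⧸ N), R.Normal ∧ R ≤ A.map (QuotientGroup.mk' N) ∧
      R ⊓ (orbitKernel Ω N).map (QuotientGroup.mk' N) = ⊥ ∧ Nat.card R = 3 := by
  have hsurj := QuotientGroup.mk'_surjective N
  obtain ⟨P, hPcard, hPc, hP⟩ := exists_subgroup_quotient_mk_mem_iff_fixesInOneOrbit hN
    (hB ▸ Nat.prime_three) hfix hone
  have := normal_of_mk_mem_iff hP
  have := Subgroup.Normal.map (inferInstance : (orbitKernel Ω N).Normal) _ hsurj
  have := Subgroup.Normal.map (inferInstance : A.Normal) _ hsurj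
  have hPK : P ≤ (orbitKernel Ω N).map (QuotientGroup.mk' N) := by
    intro x hx
    obtain ⟨k, rfl⟩ := QuotientGroup.mk_surjective x
    exact Subgroup.mem_map_of_mem _ (((hP k).mp hx).elim (le_orbitKernel ·) And.left)
  have hrelIndex : ((orbitKernel Ω N).map (QuotientGroup.mk' N)).relIndex
      (A.map (QuotientGroup.mk' N)) = 3 := by
    rw [Subgroup.relIndex_map_map, QuotientGroup.ker_mk', sup_eq_left.mpr le_orbitKernel,
      sup_eq_left.mpr (le_orbitKernel.trans hKA), hKA3]
  refine exists_normal_complement_of_card_three hPK (Subgroup.map_mono hKA) (hPcard.trans hB) hPc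
    ((Subgroup.index_map_dvd A hsurj).trans hA) hrelIndex ?_
  rintro _ ⟨a, ha, rfl⟩ haK haP
  refine (QuotientGroup.eq_one_iff (a ^ 3)).mpr (((hP (a ^ 3)).mp haP).elim id ?_)
  rintro ⟨hcubeK, hcube⟩
  by_contra hcubeN
  obtain ⟨ω, hω⟩ : (fixedBy Ω (a ^ 3)).Nonempty := by
    rw [← Set.ncard_pos, hN.ncard_fixedBy_eq_card_orbitBlocks hfix hcubeK hcubeN, hB]
    norm_num
  exact haK (Subgroup.mem_map_of_mem _ (hAK a ha ω (hcube.smul_mem_orbit_of_pow hω)))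

theorem IsSemiregular.exists_normal_isRegularOn [Finite G] [Finite Ω]
    (hN : IsSemiregular G Ω N) (hB : Nat.card (orbitBlocks Ω N) = 3)
    (hfix : ∀ g : G, g ≠ 1 → (fixedBy Ω g).ncard ≤ Nat.card (orbitBlocks Ω N))
    (hone : ∃ k ∈ orbitKernel Ω N, k ∉ N ∧ FixesInOneOrbit Ω N k) {A : Subgroup G} [A.Normal]
    (hKA : orbitKernel Ω N ≤ A) (hA : A.index ∣ 2) (hKA3 : (orbitKernel Ω N).relIndex A = 3)
    (hAK : ∀ a ∈ A, ∀ ω : Ω, a • ω ∈ orbit N ω → a ∈ orbitKernel Ω N) :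
    ∃ F : Subgroup G, F.Normal ∧ IsRegularOn G Ω F := by
  obtain ⟨R, hRn, hRA, hRK, hR⟩ :=
    hN.exists_normal_quotient_inf_eq_bot hB hfix hone hKA hA hKA3 hAK
  have hNF : N ≤ R.comap (QuotientGroup.mk' N) :=
    (QuotientGroup.ker_mk' N).ge.trans (Subgroup.ker_le_comap _ R)
  refine ⟨R.comap (QuotientGroup.mk' N), inferInstance,
    hN.isRegularOn_of_relIndex_eq hNF (fun r hr ω hω => ?_) ?_⟩
  · have hrA : r ∈ A := by
      have := Subgroup.comap_mono hRA hr
      rwa [Subgroup.comap_map_eq_self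
        ((QuotientGroup.ker_mk' N).le.trans (le_orbitKernel.trans hKA))] at this
    have hr1 : (r : G ⧸ N) ∈ (⊥ : Subgroup (G ⧸ N)) :=
      hRK.le ⟨hr, Subgroup.mem_map_of_mem _ (hAK r hrA ω hω)⟩
    exact (QuotientGroup.eq_one_iff r).mp hr1
  · calc N.relIndex (R.comap (QuotientGroup.mk' N))
        = (QuotientGroup.mk' N).ker.relIndex (R.comap (QuotientGroup.mk' N)) := by
          rw [QuotientGroup.ker_mk']
      _ = Nat.card R := by
          rw [Subgroup.relIndex_ker, Subgroup.map_comap_eq_self_of_surjective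
            (QuotientGroup.mk'_surjective N)]
      _ = Nat.card (orbitBlocks Ω N) := hR.trans hB.symm

theorem stmt_14_general (G Ω : Type*) [Group G] [Finite G] [MulAction G Ω] [Finite Ω]
    [IsPretransitive G Ω] (hfix : ∀ g : G, g ≠ 1 → (fixedBy Ω g).ncard ≤ 3)
    (N : Subgroup G) [N.Normal] (hsemi : IsSemiregular G Ω N)
    (horb : {s : Set Ω | IsOrbitOf G Ω N s}.ncard = 3) :
    ∃ F : Subgroup G, F.Normal ∧
      (IsRegularOn G Ω F ∨
        ((F.index = 3 ∨ F.index = 6) ∧ {s : Set Ω | IsOrbitOf G Ω F s}.ncard = 3 ∧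
          ∀ s : Set Ω, IsOrbitOf G Ω F s → IsFrobeniusOn G Ω F s)) := by
  have hB : Nat.card (orbitBlocks Ω N) = 3 := horb
  rw [← hB] at hfix
  obtain ⟨A, hAn, hKA, hA, hKA3, hAK⟩ := exists_normal_relIndex_orbitKernel_eq_three hB
  by_cases hone : ∃ k ∈ orbitKernel Ω N, k ∉ N ∧ FixesInOneOrbit Ω N k
  · obtain ⟨F, hFn, hF⟩ := hsemi.exists_normal_isRegularOn hB hfix hone hKA hA hKA3 hAK
    exact ⟨F, hFn, Or.inl hF⟩
  by_cases hKN : orbitKernel Ω N ≤ N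
  · have hK : orbitKernel Ω N = N := le_antisymm hKN le_orbitKernel
    rw [hK] at hKA hKA3 hAK
    exact ⟨A, hAn, Or.inl (hsemi.isRegularOn_of_relIndex_eq hKA hAK (hKA3.trans hB.symm))⟩
  have hunique (k : G) (hk : k ∈ orbitKernel Ω N) (hkN : k ∉ N) :=
    (hsemi.fixesInOneOrbit_or_existsUnique (hB ▸ Nat.prime_three)
      (hsemi.ncard_fixedBy_eq_card_orbitBlocks hfix hk hkN)).resolve_left
        fun h => hone ⟨k, hk, hkN, h⟩
  refine ⟨orbitKernel Ω N, inferInstance, Or.inr ⟨?_, ?_, fun s hs => ?_⟩⟩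
  · rw [← Subgroup.relIndex_mul_index hKA, hKA3]
    rcases (Nat.dvd_prime Nat.prime_two).mp hA with h | h <;> simp [h]
  · simpa only [isOrbitOf_orbitKernel_iff] using horb
  · exact hsemi.isFrobeniusOn_orbitKernel hunique hKN (isOrbitOf_orbitKernel_iff.mp hs)

end RegularOrFrobenius

theorem stmt_14 (G Ω : Type*) [Group G] [Finite G] [MulAction G Ω] [Finite Ω]
    [FaithfulSMul G Ω] [IsPretransitive G Ω] (hfix : HasFixity G Ω 3)
    (N : Subgroup G) (hmin : IsMinimalNormal G N)
    (p : ℕ) (n : ℕ) (hp : p.Prime) (hcard : Nat.card N = p ^ n)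
    (hsemi : IsSemiregular G Ω N)
    (horb : {s : Set Ω | IsOrbitOf G Ω N s}.ncard = 3) :
    ∃ F : Subgroup G, F.Normal ∧
      (IsRegularOn G Ω F ∨
        ((F.index = 3 ∨ F.index = 6) ∧ {s : Set Ω | IsOrbitOf G Ω F s}.ncard = 3 ∧
          ∀ s : Set Ω, IsOrbitOf G Ω F s → IsFrobeniusOn G Ω F s)) := by
  have := hmin.1
  exact stmt_14_general G Ω hfix.1 N hsemi horb
end

section
/- Let G be a finite group acting transitively and faithfully with fixity 3 on a set Ω with |Ω| = 9, and suppose G has a minimal normal subgroup N of order 3. Then G has a normal subgroup acting regularly on Ω. -/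
/-!
A normal subgroup `N` of prime order `p` acts semiregularly. If no nontrivial element fixes `2 * p`
points, a nontrivial element centralizing `N` has its fixed points in a single `N`-orbit. Hence, for
`|Ω| = p ^ 2`, a `p`-subgroup `P` of the centralizer has point stabilizers of order at most `p`.
If `P` is transitive and `ω'` lies outside the `N`-orbit of `ω`, then sending `x ∈ P` with
`x • ω = ω'` to `⟨N, x⟩` enumerates the regular subgroups `R` with `N ≤ R ≤ P`, so their number is
the order of a point stabilizer in `P`, which is `1` or `p`. This is also the index of `R` in the
`p`-group `P`, so `P` normalizes each `R`. If, moreover, `P` is normal in `G` and `G / P` is a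
`q`-group with `q ≠ p`, then conjugation by `G` fixes one of them.

For `p = 3`, let `P` consist of the elements that centralize `N` and permute the three `N`-orbits
evenly; then `P` is a `3`-group and every square of `G` lies in `P`, so that the index
of `P` is prime to `|Ω|` and `P` is transitive.
-/

open MulAction Pointwise

section SemiregularAndRegular

variable {G Ω : Type*} [Group G] [MulAction G Ω] {ω ω' : Ω}

theorem card_transporter_eq_card_stabilizer [IsPretransitive G Ω] (ω ω' : Ω) :
    Nat.card {g : G // g • ω = ω'} = Nat.card (stabilizer G ω) := by
  obtain ⟨g₀, rfl⟩ := exists_smul_eq G ω ω'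
  refine Nat.card_congr ((Equiv.mulLeft g₀).subtypeEquiv fun g ↦ ?_).symm
  simp [mul_smul]

theorem ncard_orbit_of_stabilizer_eq_bot (h : stabilizer G ω = ⊥) :
    (orbit G ω).ncard = Nat.card G := by
  rw [← index_stabilizer, h, Subgroup.index_bot]

theorem isPretransitive_of_card_le_ncard_orbit [Finite Ω]
    (h : Nat.card Ω ≤ (orbit G ω).ncard) : IsPretransitive G Ω :=
  (isPretransitive_iff_orbit_eq_univ ω).mpr <|
    (Set.eq_univ_iff_ncard _).mpr ((Set.ncard_le_card _).antisymm h)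

theorem isCancelSMul_of_isMulCommutative [IsMulCommutative G] [FaithfulSMul G Ω]
    [IsPretransitive G Ω] : IsCancelSMul G Ω := by
  refine isCancelSMul_iff_eq_one_of_smul_eq.mpr fun g ω hg ↦ ?_
  refine FaithfulSMul.eq_of_smul_eq_smul (α := Ω) fun ω' ↦ ?_
  obtain ⟨h, rfl⟩ := exists_smul_eq G ω ω'
  rw [one_smul, smul_smul, mul_comm', mul_smul, hg]

theorem isPretransitive_of_coprime_index [Finite Ω] [IsPretransitive G Ω] {P : Subgroup G}
    (h : (Nat.card Ω).Coprime P.index) : IsPretransitive P Ω := by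
  rcases isEmpty_or_nonempty Ω with _ | ⟨⟨ω⟩⟩
  · exact ⟨fun a ↦ isEmptyElim a⟩
  have hindex : (stabilizer G ω ⊓ P).index = (orbit P ω).ncard * P.index := by
    rw [← index_stabilizer, ← Subgroup.relIndex_mul_index inf_le_right,
      Subgroup.inf_relIndex_right]
    rfl
  have hdvd : Nat.card Ω ∣ (orbit P ω).ncard := by
    refine h.dvd_of_dvd_mul_right (hindex ▸ ?_)
    rw [← index_stabilizer_of_transitive G ω]
    exact Subgroup.index_dvd_of_le inf_le_left
  have hpos : 0 < (orbit P ω).ncard := (Set.ncard_pos (Set.toFinite _)).mpr (nonempty_orbit ω)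
  exact isPretransitive_of_card_le_ncard_orbit (Nat.le_of_dvd hpos hdvd)

theorem isPretransitive_of_isPGroup_of_lt_ncard_orbit {p n : ℕ} [Fact p.Prime]
    (hG : IsPGroup p G) (hΩ : Nat.card Ω = p ^ (n + 1)) (h : p ^ n < (orbit G ω).ncard) :
    IsPretransitive G Ω := by
  have : Finite Ω := Nat.finite_of_card_ne_zero (by simp [hΩ, (Fact.out : p.Prime).ne_zero])
  obtain ⟨k, hk⟩ := hG.card_orbit ω
  rw [Nat.card_coe_set_eq] at hk
  have hnk : n < k := (Nat.pow_lt_pow_iff_right (Fact.out : p.Prime).one_lt).mp (hk ▸ h)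
  refine isPretransitive_of_card_le_ncard_orbit (ω := ω) ?_
  rw [hk, hΩ]
  exact Nat.pow_le_pow_right (Fact.out : p.Prime).pos hnk

theorem isCancelSMul_of_normal_of_prime_card [FaithfulSMul G Ω] [IsPretransitive G Ω]
    {N : Subgroup G} [N.Normal] (hN : (Nat.card N).Prime) : IsCancelSMul N Ω := by
  have : Fact (Nat.card N).Prime := ⟨hN⟩
  refine isCancelSMul_iff_eq_one_of_smul_eq.mpr fun n ω hn ↦ ?_
  rcases (stabilizer N ω).eq_bot_or_eq_top_of_prime_card with h | h
  · exact Subgroup.mem_bot.mp (h ▸ hn)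
  refine FaithfulSMul.eq_of_smul_eq_smul (α := Ω) fun ω' ↦ ?_
  obtain ⟨g, rfl⟩ := exists_smul_eq G ω ω'
  have hfix : (MulAut.conjNormal g⁻¹ n) • ω = ω :=
    mem_stabilizer_iff.mp (h ▸ Subgroup.mem_top _)
  rw [Subgroup.smul_def, MulAut.conjNormal_apply, inv_inv, mul_smul, mul_smul,
    inv_smul_eq_iff] at hfix
  rw [one_smul]
  exact hfix

theorem isRegularOn_iff {R : Subgroup G} :
    IsRegularOn G Ω R ↔ IsPretransitive R Ω ∧ IsCancelSMul R Ω := by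
  refine and_congr ⟨fun h ↦ ⟨fun a b ↦ ?_⟩, fun h a b ↦ ?_⟩ ?_
  · obtain ⟨r, hr, hab⟩ := h a b
    exact ⟨⟨r, hr⟩, hab⟩
  · obtain ⟨⟨r, hr⟩, hab⟩ := exists_smul_eq R a b
    exact ⟨r, hr, hab⟩
  · simp only [isCancelSMul_iff_eq_one_of_smul_eq, Subtype.forall, Subgroup.mk_smul,
      Subgroup.mk_eq_one]
    exact forall₂_congr fun _ _ ↦ ⟨fun h ω hω ↦ by_contra fun h1 ↦ h h1 ω hω,
      fun h h1 ω hω ↦ h1 (h ω hω)⟩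

namespace IsRegularOn

variable {R S : Subgroup G}

theorem eq_of_smul_eq_smul (hR : IsRegularOn G Ω R) {a b : G} (ha : a ∈ R) (hb : b ∈ R)
    (h : a • ω = b • ω) : a = b := by
  have := (isRegularOn_iff.mp hR).2
  exact congrArg Subtype.val (IsCancelSMul.right_cancel (⟨a, ha⟩ : R) ⟨b, hb⟩ ω h)

theorem eq_of_le [Nonempty Ω] (hR : IsRegularOn G Ω R) (hS : IsRegularOn G Ω S) (h : S ≤ R) :
    S = R := by
  refine le_antisymm h fun x hx ↦ ?_
  obtain ⟨ω⟩ := ‹Nonempty Ω›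
  obtain ⟨y, hy, hyx⟩ := hS.1 ω (x • ω)
  rwa [← hR.eq_of_smul_eq_smul (h hy) hx hyx]

theorem conjAct_smul (hR : IsRegularOn G Ω R) (c : ConjAct G) : IsRegularOn G Ω (c • R) := by
  induction c using ConjAct.rec with | _ g =>
  constructor
  · intro a b
    obtain ⟨x, hx, hxab⟩ := hR.1 (g⁻¹ • a) (g⁻¹ • b)
    refine ⟨ConjAct.toConjAct g • x, Subgroup.smul_mem_pointwise_smul _ _ _ hx, ?_⟩
    rw [ConjAct.toConjAct_smul, mul_smul, mul_smul, hxab, smul_inv_smul]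
  · rintro _ ⟨x, hx, rfl⟩ hne a ha
    refine hR.2 x hx (by rintro rfl; exact hne (map_one _)) (g⁻¹ • a) ?_
    rw [eq_inv_smul_iff, ← mul_smul, ← mul_smul]
    exact ha

theorem index_subgroupOf_eq_card_stabilizer (hR : IsRegularOn G Ω R) {P : Subgroup G}
    (hRP : R ≤ P) (ω : Ω) : (R.subgroupOf P).index = Nat.card (stabilizer P ω) := by
  have hcompl : (stabilizer P ω).IsComplement' (R.subgroupOf P) := by
    refine (Subgroup.isComplement'_stabilizer ω (fun r hr ↦ ?_) fun g ↦ ?_).symm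
    · exact Subtype.ext (Subtype.ext (hR.eq_of_smul_eq_smul r.2 R.one_mem
        (hr.trans (one_smul G ω).symm)))
    · obtain ⟨r, hr, hrω⟩ := hR.1 (g • ω) ω
      exact ⟨⟨⟨r, hRP hr⟩, hr⟩, hrω⟩
  exact hcompl.index_eq_card

end IsRegularOn

end SemiregularAndRegular

section Centralizer

variable {G Ω : Type*} [Group G] [MulAction G Ω] {N : Subgroup G} {g : G} {ω ω' : Ω}

theorem orbit_subset_fixedBy (hg : g ∈ Subgroup.centralizer (N : Set G)) (hω : g • ω = ω) :
    orbit N ω ⊆ fixedBy Ω g := by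
  rintro _ ⟨n, rfl⟩
  have hcomm : (n : G) * g = g * n := Subgroup.mem_centralizer_iff.mp hg n n.2
  change g • (n : G) • ω = (n : G) • ω
  rw [smul_smul, ← hcomm, mul_smul, hω]

theorem eq_one_of_fixes_two_orbits [Finite Ω] [IsCancelSMul N Ω]
    (hfix : g ≠ 1 → (fixedBy Ω g).ncard < 2 * Nat.card N)
    (hg : g ∈ Subgroup.centralizer (N : Set G)) (hω : g • ω = ω) (hω' : g • ω' = ω')
    (h : ω' ∉ orbit N ω) : g = 1 := by
  by_contra hne
  have hdisj : Disjoint (orbit N ω) (orbit N ω') :=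
    (orbit.eq_or_disjoint ω ω').resolve_left fun heq ↦ h (heq ▸ mem_orbit_self ω')
  have hsub : orbit N ω ∪ orbit N ω' ⊆ fixedBy Ω g :=
    Set.union_subset (orbit_subset_fixedBy hg hω) (orbit_subset_fixedBy hg hω')
  have hcard := Set.ncard_le_ncard hsub
  rw [Set.ncard_union_eq hdisj,
    ncard_orbit_of_stabilizer_eq_bot (IsCancelSMul.stabilizer_eq_bot ω),
    ncard_orbit_of_stabilizer_eq_bot (IsCancelSMul.stabilizer_eq_bot ω')] at hcard
  exact absurd (hfix hne) (by omega)

-- Off `orbit N ω` the stabilizer of `ω` acts semiregularly, so it is no larger than the complement.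
theorem card_stabilizer_add_card_le [Finite Ω] [IsCancelSMul N Ω] {P : Subgroup G}
    (hPN : P ≤ Subgroup.centralizer (N : Set G))
    (hfix : ∀ g : G, g ≠ 1 → (fixedBy Ω g).ncard < 2 * Nat.card N) (h : ω' ∉ orbit N ω) :
    Nat.card (stabilizer P ω) + Nat.card N ≤ Nat.card Ω := by
  have hfree : stabilizer (stabilizer P ω) ω' = ⊥ := by
    refine (Subgroup.eq_bot_iff_forall _).mpr fun s hs ↦ Subtype.ext (Subtype.ext ?_)
    exact eq_one_of_fixes_two_orbits (hfix _) (hPN (s : P).2) s.2 hs h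
  have hdisj : Disjoint (orbit (stabilizer P ω) ω') (orbit N ω) := by
    refine Set.disjoint_left.mpr ?_
    rintro _ ⟨s, rfl⟩ hs
    have hfixed := orbit_subset_fixedBy (Subgroup.inv_mem _ (hPN (s : P).2))
      (inv_smul_eq_iff.mpr s.2.symm) hs
    rw [mem_fixedBy, inv_smul_eq_iff] at hfixed
    exact h ((smul_left_cancel _ hfixed) ▸ hs)
  rw [← ncard_orbit_of_stabilizer_eq_bot hfree,
    ← ncard_orbit_of_stabilizer_eq_bot (G := N) (IsCancelSMul.stabilizer_eq_bot ω),
    ← Set.ncard_union_eq hdisj]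
  exact Set.ncard_le_card _

theorem exists_notMem_orbit [IsCancelSMul N Ω] (h : Nat.card N < Nat.card Ω)
    (ω : Ω) : ∃ ω', ω' ∉ orbit N ω := by
  have : Finite Ω := Nat.finite_of_card_ne_zero (Nat.ne_zero_of_lt h)
  rw [← ncard_orbit_of_stabilizer_eq_bot (IsCancelSMul.stabilizer_eq_bot ω),
    ← Set.ncard_univ] at h
  obtain ⟨ω', -, hω'⟩ := Set.exists_mem_notMem_of_ncard_lt_ncard h
  exact ⟨ω', hω'⟩

theorem pow_card_eq_one_of_forall_smul_mem_orbit [FaithfulSMul G Ω]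
    (hg : g ∈ Subgroup.centralizer (N : Set G)) (h : ∀ ω : Ω, g • ω ∈ orbit N ω) :
    g ^ Nat.card N = 1 := by
  refine FaithfulSMul.eq_of_smul_eq_smul (α := Ω) fun ω ↦ (?_ : _ ∈ stabilizer G ω).trans
    (one_smul G ω).symm
  obtain ⟨n, hn⟩ := h ω
  have hcomm : Commute g n := (Subgroup.mem_centralizer_iff.mp hg n n.2).symm
  have hfix : (n : G)⁻¹ * g ∈ stabilizer G ω := by
    rw [mem_stabilizer_iff, mul_smul, inv_smul_eq_iff]
    exact hn.symm
  have hpow := pow_mem hfix (Nat.card N)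
  rwa [hcomm.symm.inv_left.mul_pow, inv_pow, ← Subgroup.coe_pow, pow_card_eq_one',
    Subgroup.coe_one, inv_one, one_mul] at hpow

theorem pow_totient_card_mem_centralizer [N.Normal] [Finite N] [IsCyclic N] (g : G) :
    g ^ (Nat.card N).totient ∈ Subgroup.centralizer (N : Set G) := by
  have hconj : MulAut.conjNormal (H := N) (g ^ (Nat.card N).totient) = 1 := by
    rw [map_pow, ← IsCyclic.card_mulAut, pow_card_eq_one']
  refine Subgroup.mem_centralizer_iff.mpr fun n hn ↦ ?_
  have hn_fixed := congrArg Subtype.val (DFunLike.congr_fun hconj ⟨n, hn⟩)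
  rw [MulAut.conjNormal_apply] at hn_fixed
  exact (mul_inv_eq_iff_eq_mul.mp hn_fixed).symm

end Centralizer

section BlocksOfThree

theorem exists_normal_forall_sq_mem_and_cube_mem_ker (G : Type*) [Group G] {B : Type*}
    [MulAction G B] (hB : Nat.card B = 3) :
    ∃ A : Subgroup G, A.Normal ∧ (toPermHom G B).ker ≤ A ∧ (∀ g : G, g ^ 2 ∈ A) ∧
      ∀ g ∈ A, g ^ 3 ∈ (toPermHom G B).ker := by
  classical
  have : Finite B := Nat.finite_of_card_ne_zero (by omega)
  have : Fintype B := Fintype.ofFinite B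
  have : Nontrivial B := Finite.one_lt_card_iff_nontrivial.mp (by omega)
  have hcard : Nat.card (alternatingGroup B) = 3 := by
    rw [nat_card_alternatingGroup, hB]
    rfl
  refine ⟨(alternatingGroup B).comap (toPermHom G B), inferInstance, Subgroup.ker_le_comap _ _,
    fun g ↦ ?_, fun g hg ↦ ?_⟩
  · rw [Subgroup.mem_comap, map_pow]
    exact Subgroup.sq_mem_of_index_two alternatingGroup.index_eq_two _
  · rw [MonoidHom.mem_ker, map_pow]
    exact congrArg Subtype.val (hcard ▸ pow_card_eq_one' (x := (⟨_, hg⟩ : alternatingGroup B)))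

variable {G Ω : Type*} [Group G] [MulAction G Ω] {N : Subgroup G} [N.Normal]

theorem mem_ker_toPermHom_orbit_iff [IsPretransitive G Ω] {ω : Ω} {g : G} :
    g ∈ (toPermHom G (orbit G (orbit N ω))).ker ↔ ∀ ω' : Ω, g • ω' ∈ orbit N ω' := by
  have hblock (ω' : Ω) : g • orbit N ω' = orbit N ω' ↔ g • ω' ∈ orbit N ω' := by
    rw [smul_orbit_eq_orbit_smul, orbit_eq_iff]
  rw [MonoidHom.mem_ker, Equiv.ext_iff]
  constructor
  · intro h ω'
    obtain ⟨a, rfl⟩ := exists_smul_eq G ω ω'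
    rw [← hblock, ← smul_orbit_eq_orbit_smul]
    exact congrArg Subtype.val (h ⟨a • orbit N ω, mem_orbit _ a⟩)
  · rintro h ⟨_, a, rfl⟩
    refine Subtype.ext ?_
    change g • a • orbit N ω = a • orbit N ω
    rw [smul_orbit_eq_orbit_smul N ω a]
    exact (hblock _).mpr (h _)

theorem exists_normal_isPGroup_three [FaithfulSMul G Ω] [IsPretransitive G Ω]
    (hΩ : Nat.card Ω = 9) (hN : Nat.card N = 3) :
    ∃ (P : Subgroup G) (_ : P.Normal), N ≤ P ∧ P ≤ Subgroup.centralizer (N : Set G) ∧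
      IsPGroup 3 P ∧ IsPGroup 2 (G ⧸ P) := by
  have : Fact (Nat.Prime 3) := ⟨Nat.prime_three⟩
  have : Finite N := Nat.finite_of_card_ne_zero (by omega)
  have : IsCyclic N := isCyclic_of_prime_card hN
  have : IsCancelSMul N Ω := isCancelSMul_of_normal_of_prime_card (hN ▸ Nat.prime_three)
  obtain ⟨ω⟩ : Nonempty Ω := (Nat.card_pos_iff.mp (by omega)).1
  have hblocks : Nat.card (orbit G (orbit N ω)) = 3 := by
    have := (IsBlock.orbit_of_normal (N := N) (G := G) ω).ncard_block_mul_ncard_orbit_eq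
      (nonempty_orbit ω)
    rw [ncard_orbit_of_stabilizer_eq_bot (IsCancelSMul.stabilizer_eq_bot ω), hN, hΩ] at this
    rw [Nat.card_coe_set_eq]
    omega
  obtain ⟨A, hA, hker, hsq, hcube⟩ := exists_normal_forall_sq_mem_and_cube_mem_ker G hblocks
  have hmem_ker {g : G} := mem_ker_toPermHom_orbit_iff (N := N) (ω := ω) (g := g)
  refine ⟨Subgroup.centralizer N ⊓ A, inferInstance, le_inf ?_ fun n hn ↦ ?_, inf_le_left, ?_, ?_⟩
  · exact Subgroup.le_centralizer N
  · exact hker (hmem_ker.mpr fun ω' ↦ mem_orbit ω' (⟨n, hn⟩ : N))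
  · rintro ⟨g, hgC, hgA⟩
    have hpow := pow_card_eq_one_of_forall_smul_mem_orbit (pow_mem hgC 3)
      (hmem_ker.mp (hcube g hgA))
    exact ⟨2, Subtype.ext (by rwa [hN, ← pow_mul] at hpow)⟩
  · intro x
    obtain ⟨g, rfl⟩ := QuotientGroup.mk_surjective x
    have hgC : g ^ 2 ∈ Subgroup.centralizer (N : Set G) := by
      have := pow_totient_card_mem_centralizer (N := N) g
      rwa [hN, Nat.totient_prime Nat.prime_three] at this
    exact ⟨1, (QuotientGroup.eq_one_iff _).mpr ⟨hgC, hsq g⟩⟩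

end BlocksOfThree

section RegularSubgroupsBetween

variable {G Ω : Type*} [Group G] [MulAction G Ω] {N P : Subgroup G} {p : ℕ} [Fact p.Prime]

/-- The set of all subgroups `R` with `N ≤ R ≤ P` that are regular on `Ω`, with the conjugation
action of `G`. A fixed point of that action is a normal regular subgroup. -/
def regularSubgroupsBetween (Ω : Type*) [MulAction G Ω] (N P : Subgroup G) [N.Normal]
    [P.Normal] : SubMulAction (ConjAct G) (Subgroup G) where
  carrier := {R | N ≤ R ∧ R ≤ P ∧ IsRegularOn G Ω R}
  smul_mem' c R := by
    rintro ⟨hNR, hRP, hR⟩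
    rw [← Subgroup.pointwise_smul_le_pointwise_smul_iff (a := c), ‹N.Normal›.conjAct] at hNR
    rw [← Subgroup.pointwise_smul_le_pointwise_smul_iff (a := c), ‹P.Normal›.conjAct] at hRP
    exact ⟨hNR, hRP, hR.conjAct_smul c⟩

theorem isRegularOn_closure_insert [FaithfulSMul G Ω] (hΩ : Nat.card Ω = p ^ 2)
    [IsCancelSMul N Ω] (hN : Nat.card N = p) (hNP : N ≤ P)
    (hPN : P ≤ Subgroup.centralizer (N : Set G)) (hP : IsPGroup p P) {ω : Ω} {x : G}
    (hx : x ∈ P) (hxω : x • ω ∉ orbit N ω) :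
    IsRegularOn G Ω (Subgroup.closure (insert x (N : Set G))) := by
  set R := Subgroup.closure (insert x (N : Set G))
  have hxR : x ∈ R := Subgroup.subset_closure (Set.mem_insert _ _)
  have hNR : N ≤ R := fun n hn ↦ Subgroup.subset_closure (Set.mem_insert_of_mem _ hn)
  have hRP : R ≤ P := (Subgroup.closure_le _).mpr (Set.insert_subset hx hNP)
  have : Finite Ω := Nat.finite_of_card_ne_zero (by simp [hΩ, (Fact.out : p.Prime).ne_zero])
  have : IsMulCommutative R := by
    refine Subgroup.isMulCommutative_closure ?_
    have hcomm {a b : G} (ha : a ∈ P) (hb : b ∈ N) : a * b = b * a :=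
      (Subgroup.mem_centralizer_iff.mp (hPN ha) b hb).symm
    rintro a (rfl | ha) b (rfl | hb)
    · rfl
    · exact hcomm hx hb
    · exact (hcomm hx ha).symm
    · exact hcomm (hNP ha) hb
  have horbit : insert (x • ω) (orbit N ω) ⊆ orbit R ω := by
    rintro _ (rfl | ⟨n, rfl⟩)
    · exact mem_orbit ω (⟨x, hxR⟩ : R)
    · exact mem_orbit ω (⟨n, hNR n.2⟩ : R)
  have hlt : p ^ 1 < (orbit R ω).ncard := by
    refine lt_of_lt_of_le ?_ (Set.ncard_le_ncard horbit)
    rw [Set.ncard_insert_of_notMem hxω,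
      ncard_orbit_of_stabilizer_eq_bot (IsCancelSMul.stabilizer_eq_bot ω), hN, pow_one]
    exact Nat.lt_succ_self p
  have : IsPretransitive R Ω :=
    isPretransitive_of_isPGroup_of_lt_ncard_orbit (hP.to_le hRP) hΩ hlt
  exact isRegularOn_iff.mpr ⟨this, isCancelSMul_of_isMulCommutative⟩

theorem card_stabilizer_dvd [FaithfulSMul G Ω] (hΩ : Nat.card Ω = p ^ 2)
    [IsCancelSMul N Ω] (hN : Nat.card N = p) (hPN : P ≤ Subgroup.centralizer (N : Set G))
    (hP : IsPGroup p P) (hfix : ∀ g : G, g ≠ 1 → (fixedBy Ω g).ncard < 2 * p) (ω : Ω) :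
    Nat.card (stabilizer P ω) ∣ p := by
  have hp : p.Prime := Fact.out
  have : Finite Ω := Nat.finite_of_card_ne_zero (by simp [hΩ, hp.ne_zero])
  have : Finite G := Finite.of_injective _ (toPerm_injective (α := G) (β := Ω))
  obtain ⟨ω', hω'⟩ := exists_notMem_orbit (N := N) (by
    rw [hN, hΩ]; exact lt_self_pow₀ hp.one_lt one_lt_two) ω
  obtain ⟨k, hk⟩ := IsPGroup.iff_card.mp (hP.to_subgroup (stabilizer P ω))
  have hle := card_stabilizer_add_card_le hPN (hN ▸ hfix) hω'
  rw [hN, hΩ] at hle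
  have hk2 : k < 2 := by
    refine (Nat.pow_lt_pow_iff_right hp.one_lt).mp (hk ▸ ?_)
    have := hp.pos
    omega
  rw [hk]
  exact (pow_dvd_pow p (Nat.le_of_lt_succ hk2)).trans (pow_one p).dvd

theorem normal_of_isPGroup_of_index_dvd [Finite G] (hG : IsPGroup p G)
    {H : Subgroup G} (hH : H.index ∣ p) : H.Normal := by
  rcases (Nat.dvd_prime Fact.out).mp hH with h | h
  · exact Subgroup.normal_of_index_eq_one h
  · obtain ⟨n, hn⟩ := IsPGroup.iff_card.mp hG
    have hn0 : n ≠ 0 := by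
      rintro rfl
      have hdvd := H.index_dvd_card
      rw [h, hn, pow_zero, Nat.dvd_one] at hdvd
      exact (Fact.out : p.Prime).ne_one hdvd
    refine Subgroup.normal_of_index_eq_minFac_card ?_
    rw [h, hn, (Fact.out : p.Prime).pow_minFac hn0]

variable [N.Normal] [P.Normal]

theorem card_regularSubgroupsBetween [FaithfulSMul G Ω] (hΩ : Nat.card Ω = p ^ 2)
    [IsCancelSMul N Ω] [IsPretransitive P Ω] (hN : Nat.card N = p) (hNP : N ≤ P)
    (hPN : P ≤ Subgroup.centralizer (N : Set G)) (hP : IsPGroup p P) (ω : Ω) :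
    Nat.card (regularSubgroupsBetween Ω N P) = Nat.card (stabilizer P ω) := by
  have hp : p.Prime := Fact.out
  have : Finite Ω := Nat.finite_of_card_ne_zero (by simp [hΩ, hp.ne_zero])
  have : Nonempty Ω := ⟨ω⟩
  obtain ⟨ω', hω'⟩ := exists_notMem_orbit (N := N) (by
    rw [hN, hΩ]; exact lt_self_pow₀ hp.one_lt one_lt_two) ω
  have hreg (x : {x : P // x • ω = ω'}) :
      IsRegularOn G Ω (Subgroup.closure (insert (x : G) (N : Set G))) :=
    isRegularOn_closure_insert hΩ hN hNP hPN hP (x : P).2 (x.2.symm ▸ hω')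
  have hle {R : Subgroup G} {x : G} (hx : x ∈ R) (hNR : N ≤ R) :
      Subgroup.closure (insert x (N : Set G)) ≤ R :=
    (Subgroup.closure_le _).mpr (Set.insert_subset hx hNR)
  rw [← card_transporter_eq_card_stabilizer ω ω']
  symm
  refine Nat.card_eq_of_bijective (fun x ↦ ⟨Subgroup.closure (insert (x : G) N),
    fun n hn ↦ Subgroup.subset_closure (Set.mem_insert_of_mem _ hn), hle (x : P).2 hNP,
    hreg x⟩) ⟨fun x y hxy ↦ ?_, ?_⟩
  · have hmem (z : {x : P // x • ω = ω'}) : (z : G) ∈ Subgroup.closure (insert (z : G) N) :=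
      Subgroup.subset_closure (Set.mem_insert _ _)
    have hyx : (y : G) ∈ Subgroup.closure (insert (x : G) N) :=
      (congrArg Subtype.val hxy).ge (hmem y)
    exact Subtype.ext (Subtype.ext ((hreg x).eq_of_smul_eq_smul (hmem x) hyx (x.2.trans y.2.symm)))
  · rintro ⟨R, hNR, hRP, hR⟩
    obtain ⟨x, hx, hxω⟩ := hR.1 ω ω'
    exact ⟨⟨⟨x, hRP hx⟩, hxω⟩, Subtype.ext (hR.eq_of_le (hreg _) (hle hx hNR))⟩

theorem conjAct_smul_eq_self_of_mem_regularSubgroupsBetween [Finite P] {ω : Ω}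
    (hP : IsPGroup p P) (hdvd : Nat.card (stabilizer P ω) ∣ p) {R : Subgroup G}
    (hR : R ∈ regularSubgroupsBetween Ω N P) {g : G} (hg : g ∈ P) :
    ConjAct.toConjAct g • R = R := by
  obtain ⟨-, hRP, hR⟩ := hR
  have hnormal : (R.subgroupOf P).Normal :=
    normal_of_isPGroup_of_index_dvd hP (hR.index_subgroupOf_eq_card_stabilizer hRP ω ▸ hdvd)
  exact Subgroup.conjAct_pointwise_smul_eq_self
    ((Subgroup.normal_subgroupOf_iff_le_normalizer hRP).mp hnormal hg)

theorem isPretransitive_of_isPGroup_quotient [P.FiniteIndex] [IsPretransitive G Ω] {q n : ℕ}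
    [Fact q.Prime] (hqp : q ≠ p) (hΩ : Nat.card Ω = p ^ n) (hq : IsPGroup q (G ⧸ P)) :
    IsPretransitive P Ω := by
  have hp : p.Prime := Fact.out
  have : Finite Ω := Nat.finite_of_card_ne_zero (by simp [hΩ, hp.ne_zero])
  obtain ⟨k, hk⟩ := IsPGroup.iff_card.mp hq
  refine isPretransitive_of_coprime_index ?_
  rw [Subgroup.index_eq_card, hk, hΩ]
  exact Nat.Coprime.pow _ _ ((Nat.coprime_primes hp Fact.out).mpr hqp.symm)

theorem exists_normal_isRegularOn_of_isPGroup_quotient [FaithfulSMul G Ω] [IsPretransitive G Ω]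
    {q : ℕ} [Fact q.Prime] (hqp : q ≠ p) (hΩ : Nat.card Ω = p ^ 2)
    (hfix : ∀ g : G, g ≠ 1 → (fixedBy Ω g).ncard < 2 * p) (hN : Nat.card N = p) (hNP : N ≤ P)
    (hPN : P ≤ Subgroup.centralizer (N : Set G)) (hP : IsPGroup p P)
    (hq : IsPGroup q (G ⧸ P)) :
    ∃ R : Subgroup G, R.Normal ∧ IsRegularOn G Ω R := by
  have hp : p.Prime := Fact.out
  have hΩ_pos : 0 < Nat.card Ω := hΩ ▸ pow_pos hp.pos 2
  have : Finite Ω := Nat.finite_of_card_ne_zero hΩ_pos.ne'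
  have : Finite G := Finite.of_injective _ (toPerm_injective (α := G) (β := Ω))
  obtain ⟨ω⟩ : Nonempty Ω := (Nat.card_pos_iff.mp hΩ_pos).1
  have : IsCancelSMul N Ω := isCancelSMul_of_normal_of_prime_card (hN ▸ hp)
  have : IsPretransitive P Ω := isPretransitive_of_isPGroup_quotient hqp hΩ hq
  have hdvd : Nat.card (stabilizer P ω) ∣ p := card_stabilizer_dvd hΩ hN hPN hP hfix ω
  let X := regularSubgroupsBetween Ω N P
  have hX : ¬ q ∣ Nat.card X := by
    rw [card_regularSubgroupsBetween hΩ hN hNP hPN hP ω]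
    exact fun h ↦ hqp ((Nat.prime_dvd_prime_iff_eq Fact.out hp).mp (h.trans hdvd))
  have hrange : IsPGroup q (toPermHom (ConjAct G) X).range := by
    rintro ⟨_, c, rfl⟩
    obtain ⟨k, hk⟩ := hq (QuotientGroup.mk (ConjAct.ofConjAct c))
    refine ⟨k, Subtype.ext ?_⟩
    change toPermHom (ConjAct G) X c ^ q ^ k = 1
    rw [← map_pow]
    ext1 R
    exact Subtype.ext (conjAct_smul_eq_self_of_mem_regularSubgroupsBetween hP hdvd R.2
      ((QuotientGroup.eq_one_iff _).mp hk))
  obtain ⟨R, hR⟩ := hrange.nonempty_fixed_point_of_prime_not_dvd_card X hX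
  refine ⟨R, Subgroup.normalizer_eq_top_iff.mp (eq_top_iff.mpr fun g _ ↦ ?_), R.2.2.2⟩
  rw [← Subgroup.conjAct_pointwise_smul_iff]
  exact congrArg Subtype.val (hR ⟨_, ConjAct.toConjAct g, rfl⟩)

end RegularSubgroupsBetween

-- Five is one less than the size `2 * 3` of two `N`-orbits.
theorem stmt_19_general (G Ω : Type*) [Group G] [MulAction G Ω] [FaithfulSMul G Ω]
    [IsPretransitive G Ω] (hfix : ∀ g : G, g ≠ 1 → (fixedBy Ω g).ncard ≤ 5)
    (hΩ : Nat.card Ω = 9) (N : Subgroup G) [N.Normal] (hN : Nat.card N = 3) :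
    ∃ R : Subgroup G, R.Normal ∧ IsRegularOn G Ω R := by
  have : Fact (Nat.Prime 3) := ⟨Nat.prime_three⟩
  obtain ⟨P, hP_normal, hNP, hPN, hP, hquot⟩ := exists_normal_isPGroup_three hΩ hN
  exact exists_normal_isRegularOn_of_isPGroup_quotient (by decide) hΩ
    (fun g hg ↦ Nat.lt_succ_of_le (hfix g hg)) hN hNP hPN hP hquot

theorem stmt_19 (G Ω : Type*) [Group G] [Finite G] [MulAction G Ω] [Finite Ω]
    [FaithfulSMul G Ω] [IsPretransitive G Ω] (hfix : HasFixity G Ω 3)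
    (hΩ : Nat.card Ω = 9)
    (N : Subgroup G) (hmin : IsMinimalNormal G N) (hN : Nat.card N = 3) :
    ∃ R : Subgroup G, R.Normal ∧ IsRegularOn G Ω R := by
  have := hmin.1
  exact stmt_19_general G Ω (fun g hg ↦ (hfix.1 g hg).trans (by decide)) hΩ N hN
end
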